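/- arXiv:1208.0085 — 4 statements merged into one kernel-verified Lean document; each statement's English description precedes it below -/
import Mathlib

section
/- Let k ≥ 0 and let G be a finite simple graph on n vertices with α'(G) = 3k and Max(G) = 2k. Then |E(G)| ≤ C(3k,2) + 3k(n - 3k), where C(3k,2) = (3k)(3k-1)/2. -/
/-!
Removing two vertices lowers the matching number by at most `2`. So if Max always plays an edge
of a maximum matching, each round of two moves costs at most `3`, and `Max(G) ≥ 2α'(G)/3`
(`two_mul_le_gameValue`). Consequently a graph with `α' = 3(k+1)` and `Max = 2(k+1)` is tight in
a hereditary way: for *every* edge `uv` of a maximum matching, Min has a reply `xy` such that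
`G - {u,v,x,y}` has `α' = 3k` and `Max = 2k` (`exists_reply`). The edge bound is proved by
induction on `k` (`sum_degIn_bound`).

Deleting `v, u, x, y` one after the other destroys at most
`deg v + deg_{G-v}(u) + (n-3) + (n-4)` edges, and the induction closes as soon as
`deg v + deg_{G-v}(u) ≤ 3(k+1) + (n-2)`. Hence it suffices to find an edge `uv` of a maximum
matching such that `deg v ≤ 3k+3`, or such that `deg v = 3k+4` and `u` misses some vertex.

* A set of at least `2m+2` vertices without a matching of size `m+1` contains a vertex of degree at
  most `m` in it (`exists_degIn_le`): two vertices missed by a maximum matching of size `r ≤ m`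
  send at most `2r` edges into it, for otherwise there is an augmenting path of length three.
  Applied to the non-isolated vertices that remain after one round, this gives a non-isolated
  vertex `v` with `deg v ≤ 3k+4`.
* Every non-isolated vertex `v` lies on an edge `uv` of a maximum matching (`exists_partner`).
  If `deg v = 3k+4` and all possible partners `u` are adjacent to everything, then by an exchange
  argument all neighbours of `v` are possible partners (`HasM.exchange`). At least `3k+1` of these
  dominating vertices survive the round, which yields a matching of size `3k+1` in
  `G - {u,v,x,y}`, a contradiction.
-/

open Finset

variable {V : Type*} [DecidableEq V]

/-- The legal moves in the matching game on `G` when the set of remaining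
(undeleted) vertices is `s`: ordered pairs of adjacent remaining vertices. -/
def matchPlays (G : SimpleGraph V) [DecidableRel G.Adj] (s : Finset V) :
    Finset (V × V) :=
  (s ×ˢ s).filter fun p => G.Adj p.1 p.2

lemma matchPlays_card {G : SimpleGraph V} [DecidableRel G.Adj] {s : Finset V}
    {p : V × V} (hp : p ∈ matchPlays G s) :
    (s \ {p.1, p.2}).card < s.card := by
  simp only [matchPlays, mem_filter, mem_product] at hp
  refine card_lt_card (Finset.sdiff_ssubset ?_ ⟨p.1, mem_insert_self _ _⟩)
  intro x hx
  rcases mem_insert.mp hx with h | h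
  · exact h ▸ hp.1.1
  · exact (mem_singleton.mp h) ▸ hp.1.2

/-- The value of the matching game on the subgraph of `G` induced by the vertex
set `s`, with Max to move if `maxTurn = true` and Min to move otherwise:
the number of *further* edges added to the matching under optimal play. -/
def gameValue (G : SimpleGraph V) [DecidableRel G.Adj] (maxTurn : Bool)
    (s : Finset V) : ℕ :=
  if h : (matchPlays G s).Nonempty then
    if maxTurn then
      (matchPlays G s).attach.sup
        fun p => 1 + gameValue G false (s \ {p.1.1, p.1.2})
    else
      (matchPlays G s).attach.inf' (by simpa using h)
        fun p => 1 + gameValue G true (s \ {p.1.1, p.1.2})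
  else 0
termination_by s.card
decreasing_by
  · exact matchPlays_card p.2
  · exact matchPlays_card p.2

/-- The Max-start game matching number `Max(G)`. -/
noncomputable def gameMax [Fintype V] (G : SimpleGraph V) : ℕ :=
  letI : DecidableRel G.Adj := Classical.decRel _
  gameValue G true Finset.univ

/-- The Min-start game matching number `Min(G)`. -/
noncomputable def gameMin [Fintype V] (G : SimpleGraph V) : ℕ :=
  letI : DecidableRel G.Adj := Classical.decRel _
  gameValue G false Finset.univ

/-- `M` is a matching in `G`: a set of edges of `G` that are pairwise
vertex-disjoint. -/
def IsMatchingSet (G : SimpleGraph V) (M : Finset (Sym2 V)) : Prop :=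
  (∀ e ∈ M, e ∈ G.edgeSet) ∧
    ∀ e ∈ M, ∀ f ∈ M, e ≠ f → ∀ v : V, v ∈ e → v ∉ f

/-- The matching number `α'(G)`: the maximum size of a matching in `G`. -/
noncomputable def matchingNumber (G : SimpleGraph V) : ℕ :=
  sSup {n | ∃ M : Finset (Sym2 V), IsMatchingSet G M ∧ M.card = n}

section MatchingGame

variable (G : SimpleGraph V)

/-- The subgraph of `G` induced by `s` has a matching of size `m`. -/
def HasM : ℕ → Finset V → Prop
  | 0, _ => True
  | m + 1, s => ∃ u ∈ s, ∃ v ∈ s, G.Adj u v ∧ HasM m (s \ {u, v})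

/-- The degree of `v` into the vertex set `s`. -/
def degIn [DecidableRel G.Adj] (s : Finset V) (v : V) : ℕ := (s.filter (G.Adj v)).card

variable {G}

/-! ### Matchings -/

lemma HasM.mono {m : ℕ} : ∀ {s t : Finset V}, s ⊆ t → HasM G m s → HasM G m t := by
  induction m with
  | zero => intros; trivial
  | succ m ih =>
    rintro s t hst ⟨u, hu, v, hv, huv, h⟩
    exact ⟨u, hst hu, v, hst hv, huv, ih (sdiff_subset_sdiff hst subset_rfl) h⟩

lemma HasM.two_mul_le {m : ℕ} : ∀ {s : Finset V}, HasM G m s → 2 * m ≤ s.card := by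
  induction m with
  | zero => intros; omega
  | succ m ih =>
    rintro s ⟨u, hu, v, hv, huv, h⟩
    have h1 := ih h
    have h2 : ({u, v} : Finset V) ⊆ s := by
      intro z hz; simp at hz; rcases hz with rfl | rfl <;> assumption
    rw [card_sdiff_of_subset h2, card_pair huv.ne] at h1
    have := card_le_card h2
    rw [card_pair huv.ne] at this
    omega

/-- A matching either avoids `v` or matches `v` with some vertex `u`. -/
lemma HasM.erase_or {m : ℕ} (v : V) : ∀ {s : Finset V}, HasM G (m + 1) s →
    HasM G (m + 1) (s.erase v) ∨
      (v ∈ s ∧ ∃ u ∈ s, G.Adj v u ∧ HasM G m (s \ {u, v})) := by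
  induction m with
  | zero =>
    rintro s ⟨p, hp, q, hq, hpq, -⟩
    by_cases h1 : v = p
    · subst h1; exact .inr ⟨hp, q, hq, hpq, trivial⟩
    by_cases h2 : v = q
    · subst h2; exact .inr ⟨hq, p, hp, hpq.symm, trivial⟩
    exact .inl ⟨p, by grind, q, by grind, hpq, trivial⟩
  | succ m ih =>
    rintro s ⟨p, hp, q, hq, hpq, h⟩
    by_cases h1 : v = p
    · subst h1
      refine .inr ⟨hp, q, hq, hpq, ?_⟩
      rwa [pair_comm]
    by_cases h2 : v = q
    · subst h2; exact .inr ⟨hq, p, hp, hpq.symm, h⟩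
    rcases ih h with h | ⟨hv, u, hu, hvu, h⟩
    · exact .inl ⟨p, by grind, q, by grind, hpq, h.mono (by grind)⟩
    · exact .inr ⟨by grind, u, by grind, hvu, p, by grind, q, by grind, hpq, h.mono (by grind)⟩

lemma HasM.pred {m : ℕ} : ∀ {s : Finset V}, HasM G (m + 1) s → HasM G m s := by
  rintro s ⟨u, hu, v, hv, huv, h⟩
  exact h.mono sdiff_subset

lemma HasM.erase {m : ℕ} {s : Finset V} (v : V) (h : HasM G (m + 1) s) :
    HasM G m (s.erase v) := by
  rcases h.erase_or v with h | ⟨hv, u, hu, hvu, h⟩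
  · exact h.pred
  · exact h.mono (by grind)

lemma HasM.sdiff_pair {m : ℕ} {s : Finset V} (x y : V) (h : HasM G (m + 2) s) :
    HasM G m (s \ {x, y}) :=
  ((h.erase x).erase y).mono (by grind)

lemma HasM.of_le {m r : ℕ} {s : Finset V} (hr : r ≤ m) (h : HasM G m s) : HasM G r s := by
  induction m, hr using Nat.le_induction with
  | base => exact h
  | succ m _ ih => exact ih h.pred

/-- Every non-isolated vertex lies on an edge of some maximum matching. -/
lemma exists_partner {m : ℕ} {s : Finset V} {v w : V} (h : HasM G (m + 1) s)
    (hw : w ∈ s) (hvw : G.Adj v w) : ∃ u ∈ s, G.Adj v u ∧ HasM G m (s \ {u, v}) := by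
  rcases h.erase_or v with h | ⟨-, h⟩
  · exact ⟨w, hw, hvw, (h.erase w).mono (by grind)⟩
  · exact h

/-- If `u` is adjacent to all other vertices of `s`, a matching avoiding `u` and `v` can be turned
into one avoiding `w` and `v`, the former partner of `w` being rematched with `u`. -/
lemma HasM.exchange {m : ℕ} {s : Finset V} {u v w : V} (hu : u ∈ s) (huv : u ≠ v)
    (hdom : ∀ z ∈ s, z ≠ u → G.Adj u z)
    (h : HasM G m (s \ {u, v})) : HasM G m (s \ {w, v}) := by
  cases m with
  | zero => trivial
  | succ m =>
    by_cases hwu : w = u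
    · subst hwu; exact h
    rcases h.erase_or w with h | ⟨-, z, hz, hwz, h⟩
    · exact h.mono (by grind)
    · have := hwz.ne
      exact ⟨u, by grind, z, by grind, hdom z (by grind) (by grind), h.mono (by grind)⟩

lemma HasM.exact {m : ℕ} : ∀ {s : Finset V}, HasM G m s →
    ∃ w ⊆ s, w.card = 2 * m ∧ HasM G m w := by
  induction m with
  | zero => intro s _; exact ⟨∅, by simp, by simp, trivial⟩
  | succ m ih =>
    rintro s ⟨u, hu, v, hv, huv, h⟩
    obtain ⟨w, hws, hw, hm⟩ := ih h
    have hu' : u ∉ insert v w := by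
      have := huv.ne; intro h; grind
    have hv' : v ∉ w := by intro h; grind
    refine ⟨insert u (insert v w), by grind, ?_, u, by simp, v, by simp, huv, hm.mono (by grind)⟩
    rw [card_insert_of_notMem hu', card_insert_of_notMem hv']; omega

/-- The matching survives the deletion of isolated vertices. -/
lemma HasM.of_support {m : ℕ} : ∀ {s f : Finset V},
    (∀ p ∈ s, ∀ q ∈ s, G.Adj p q → p ∈ f) → HasM G m s → HasM G m f := by
  induction m with
  | zero => intros; trivial
  | succ m ih =>
    rintro s f hf ⟨u, hu, v, hv, huv, h⟩
    refine ⟨u, hf u hu v hv huv, v, hf v hv u hu huv.symm, huv, ih ?_ h⟩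
    intro p hp q hq hpq
    have := hf p (by grind) q (by grind) hpq
    grind

/-! ### Degrees -/

section Degrees

variable [DecidableRel G.Adj]

lemma degIn_insert {s : Finset V} {a : V} (ha : a ∉ s) (v : V) :
    degIn G (insert a s) v = degIn G s v + if G.Adj v a then 1 else 0 := by
  unfold degIn
  rw [filter_insert]
  split_ifs with h
  · rw [card_insert_of_notMem (by simp [ha])]
  · rfl

/-- If two vertices outside a perfectly matched set `w` send more than `|w|` edges into it, then
some matching edge is the middle of an augmenting path of length three between them. -/
lemma HasM.augment {m : ℕ} {a b : V} (hab : a ≠ b) : ∀ {w : Finset V}, w.card = 2 * m →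
    HasM G m w → a ∉ w → b ∉ w → 2 * m < degIn G w a + degIn G w b →
    HasM G (m + 1) (insert a (insert b w)) := by
  induction m with
  | zero =>
    intro w hw _ _ _ h
    have : w = ∅ := by simpa using hw
    subst this
    simp [degIn] at h
  | succ m ih =>
    rintro w hw ⟨p, hp, q, hq, hpq, hm⟩ ha hb hdeg
    have hne := hpq.ne
    set w' := w \ {p, q} with hw'
    have e : w = insert p (insert q w') := by grind
    have hp' : p ∉ insert q w' := by intro h; grind
    have hq' : q ∉ w' := by intro h; grind
    have hc : w'.card = 2 * m := by
      rw [e, card_insert_of_notMem hp', card_insert_of_notMem hq'] at hw; omega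
    have hap : a ≠ p := by rintro rfl; exact ha hp
    have haq : a ≠ q := by rintro rfl; exact ha hq
    have hbp : b ≠ p := by rintro rfl; exact hb hp
    have hbq : b ≠ q := by rintro rfl; exact hb hq
    by_cases hlt : 2 * m < degIn G w' a + degIn G w' b
    · exact ⟨p, by grind, q, by grind, hpq,
        (ih hc hm (by grind) (by grind) hlt).mono (by grind)⟩
    · rw [e, degIn_insert hp', degIn_insert hp', degIn_insert hq', degIn_insert hq'] at hdeg
      have key : (G.Adj a p ∧ G.Adj b q) ∨ (G.Adj a q ∧ G.Adj b p) := by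
        by_contra hcon
        split_ifs at hdeg <;> first | omega | tauto
      rcases key with ⟨h1, h2⟩ | ⟨h1, h2⟩
      · exact ⟨a, by grind, p, by grind, h1, b, by grind, q, by grind, h2, hm.mono (by grind)⟩
      · exact ⟨a, by grind, q, by grind, h1, b, by grind, p, by grind, h2, hm.mono (by grind)⟩

lemma exists_degIn_le {m : ℕ} {t : Finset V} (hcard : 2 * m + 2 ≤ t.card)
    (hm : ¬ HasM G (m + 1) t) : ∃ v ∈ t, degIn G t v ≤ m := by
  obtain ⟨r, hrm, hr, hr'⟩ : ∃ r ≤ m, HasM G r t ∧ ¬ HasM G (r + 1) t := by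
    by_contra! hcon
    have : ∀ r ≤ m + 1, HasM G r t := by
      intro r
      induction r with
      | zero => intro _; trivial
      | succ r ih => intro h; exact hcon r (by omega) (ih (by omega))
    exact hm (this _ le_rfl)
  obtain ⟨w, hwt, hw, hmw⟩ := hr.exact
  have h1 : 1 < (t \ w).card := by rw [card_sdiff_of_subset hwt]; omega
  obtain ⟨a, ha, b, hb, hab⟩ := one_lt_card.1 h1
  simp only [mem_sdiff] at ha hb
  have hdeg : ∀ z ∈ t, z ∉ w → degIn G t z = degIn G w z := by
    intro z hz hzw
    unfold degIn
    congr 1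
    ext y
    simp only [mem_filter]
    refine ⟨fun ⟨hy, hzy⟩ => ⟨?_, hzy⟩, fun ⟨hy, hzy⟩ => ⟨hwt hy, hzy⟩⟩
    by_contra hyw
    exact hr' ⟨z, hz, y, hy, hzy, hmw.mono (by grind)⟩
  by_cases hs : 2 * r < degIn G w a + degIn G w b
  · exact absurd ((HasM.augment hab hw hmw ha.2 hb.2 hs).mono (by grind)) hr'
  · rw [← hdeg a ha.1 ha.2, ← hdeg b hb.1 hb.2] at hs
    by_cases h : degIn G t a ≤ m
    · exact ⟨a, ha.1, h⟩
    · exact ⟨b, hb.1, by omega⟩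

/-- The sum of the degrees in `s`, i.e. twice the number of edges, drops by twice the degree of a
deleted vertex. -/
lemma sum_degIn_erase {s : Finset V} {v : V} (hv : v ∈ s) :
    ∑ z ∈ s, degIn G s z =
      ∑ z ∈ s.erase v, degIn G (s.erase v) z + 2 * degIn G (s.erase v) v := by
  obtain ⟨t, ht, rfl⟩ : ∃ t, v ∉ t ∧ insert v t = s :=
    ⟨s.erase v, by simp, insert_erase hv⟩
  rw [erase_insert ht, sum_insert ht]
  simp only [degIn_insert ht]
  rw [sum_add_distrib]
  have : ∑ x ∈ t, (if G.Adj x v then 1 else 0) = degIn G t v := by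
    unfold degIn
    rw [card_filter]
    simp only [G.adj_comm v]
  simp only [this, SimpleGraph.irrefl, if_false]
  ring

lemma degIn_le_erase {s : Finset V} {v : V} (hv : v ∈ s) : degIn G s v + 1 ≤ s.card := by
  have h : degIn G s v ≤ (s.erase v).card := by
    refine card_le_card fun z hz => ?_
    simp only [mem_filter] at hz
    exact mem_erase.2 ⟨hz.2.ne', hz.1⟩
  have := card_erase_add_one hv
  omega

lemma degIn_erase_self {s : Finset V} (v : V) : degIn G (s.erase v) v = degIn G s v := by
  unfold degIn
  congr 1
  ext z
  simp only [mem_filter, mem_erase]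
  exact ⟨fun h => ⟨h.1.2, h.2⟩, fun h => ⟨⟨h.2.ne', h.1⟩, h.2⟩⟩

/-! ### The game -/

lemma HasM.nonempty {m : ℕ} {s : Finset V} (h : HasM G (m + 1) s) :
    (matchPlays G s).Nonempty := by
  obtain ⟨u, hu, v, hv, huv, -⟩ := h
  exact ⟨(u, v), by simp [matchPlays, hu, hv, huv]⟩

lemma le_gameValue_true {s : Finset V} {u v : V} (hu : u ∈ s) (hv : v ∈ s) (huv : G.Adj u v) :
    1 + gameValue G false (s \ {u, v}) ≤ gameValue G true s := by
  have hm : (u, v) ∈ matchPlays G s := by simp [matchPlays, hu, hv, huv]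
  rw [gameValue.eq_1 G true s, dif_pos ⟨_, hm⟩, if_pos rfl]
  exact Finset.le_sup (f := fun p : {x // x ∈ matchPlays G s} =>
    1 + gameValue G false (s \ {p.1.1, p.1.2})) (mem_attach _ ⟨(u, v), hm⟩)

lemma exists_gameValue_false {s : Finset V} (h : (matchPlays G s).Nonempty) :
    ∃ x ∈ s, ∃ y ∈ s, G.Adj x y ∧
      gameValue G false s = 1 + gameValue G true (s \ {x, y}) := by
  rw [gameValue.eq_1 G false s, dif_pos h, if_neg (by simp)]
  obtain ⟨p, -, hp⟩ := exists_mem_eq_inf' (s := (matchPlays G s).attach) (by simpa using h)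
    (fun p => 1 + gameValue G true (s \ {p.1.1, p.1.2}))
  have := p.2
  simp only [matchPlays, mem_filter, mem_product] at this
  exact ⟨p.1.1, this.1.1, p.1.2, this.1.2, this.2, hp⟩

/-- `Max ≥ 2α'/3` for `α' ∈ {3k, 3k + 1}`: Max plays an edge of a maximum matching, and the reply
destroys at most two more edges of it. -/
lemma two_mul_le_gameValue (k : ℕ) : ∀ s : Finset V,
    (HasM G (3 * k) s → 2 * k ≤ gameValue G true s) ∧
    (HasM G (3 * k + 1) s → 2 * k + 1 ≤ gameValue G true s) := by
  induction k with
  | zero =>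
    refine fun s => ⟨fun _ => by omega, ?_⟩
    rintro ⟨u, hu, v, hv, huv, -⟩
    have := le_gameValue_true hu hv huv
    omega
  | succ k ih =>
    intro s
    constructor
    · rintro ⟨u, hu, v, hv, huv, h⟩
      have h1 := le_gameValue_true hu hv huv
      obtain ⟨x, hx, y, hy, hxy, e⟩ := exists_gameValue_false h.nonempty
      have := (ih _).1 (h.sdiff_pair x y)
      omega
    · rintro ⟨u, hu, v, hv, huv, h⟩
      have h1 := le_gameValue_true hu hv huv
      obtain ⟨x, hx, y, hy, hxy, e⟩ := exists_gameValue_false h.nonempty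
      have := (ih _).2 (h.sdiff_pair x y)
      omega

/-- In a tight position, Min answers every edge `uv` of a maximum matching by a move leading to a
tight position. -/
lemma exists_reply {k : ℕ} {s : Finset V} {u v : V} (hval : gameValue G true s ≤ 2 * (k + 1))
    (hu : u ∈ s) (hv : v ∈ s) (huv : G.Adj u v) (h : HasM G (3 * k + 2) (s \ {u, v})) :
    ∃ x ∈ s \ {u, v}, ∃ y ∈ s \ {u, v}, G.Adj x y ∧
      HasM G (3 * k) ((s \ {u, v}) \ {x, y}) ∧
      gameValue G true ((s \ {u, v}) \ {x, y}) ≤ 2 * k ∧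
      ¬ HasM G (3 * k + 1) ((s \ {u, v}) \ {x, y}) := by
  have h1 := le_gameValue_true hu hv huv
  obtain ⟨x, hx, y, hy, hxy, e⟩ := exists_gameValue_false h.nonempty
  refine ⟨x, hx, y, hy, hxy, h.sdiff_pair x y, by omega, fun hc => ?_⟩
  have := (two_mul_le_gameValue k _).2 hc
  omega

/-- A tight position has a non-isolated vertex of degree at most `3k + 4`. -/
lemma exists_small_degIn {k : ℕ} {s : Finset V} (hM : HasM G (3 * (k + 1)) s)
    (hval : gameValue G true s ≤ 2 * (k + 1)) :
    ∃ v ∈ s, ∃ w ∈ s, G.Adj v w ∧ degIn G s v ≤ 3 * k + 4 := by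
  obtain ⟨u, hu, v, hv, huv, h⟩ := id hM
  obtain ⟨x, hx, y, hy, hxy, -, -, hno⟩ := exists_reply hval hu hv huv h
  set s0 := s.filter (fun p => ∃ q ∈ s, G.Adj p q) with hs0
  have hM0 : HasM G (3 * (k + 1)) s0 :=
    hM.of_support fun p hp q hq hpq => by simp only [hs0, mem_filter]; exact ⟨hp, q, hq, hpq⟩
  have hc0 := hM0.two_mul_le
  set t := s0 \ {u, v, x, y} with ht
  have hct : 2 * (3 * k) + 2 ≤ t.card := by
    have h1 := le_card_sdiff ({u, v, x, y} : Finset V) s0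
    have h2 : ({u, v, x, y} : Finset V).card ≤ 4 := card_le_four
    rw [← ht] at h1
    omega
  have hno' : ¬ HasM G (3 * k + 1) t := fun hc => hno (hc.mono (by grind))
  obtain ⟨z, hz, hdz⟩ := exists_degIn_le hct hno'
  have hz0 : z ∈ s0 := (mem_sdiff.1 hz).1
  obtain ⟨hzs, q, hq, hzq⟩ := mem_filter.1 hz0
  refine ⟨z, hzs, q, hq, hzq, ?_⟩
  have hsub : s.filter (G.Adj z) ⊆ t.filter (G.Adj z) ∪ {u, v, x, y} := by
    intro p hp
    obtain ⟨hp, hzp⟩ := mem_filter.1 hp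
    have : p ∈ s0 := mem_filter.2 ⟨hp, z, hzs, hzp.symm⟩
    by_cases hpp : p ∈ ({u, v, x, y} : Finset V)
    · exact mem_union_right _ hpp
    · exact mem_union_left _ (mem_filter.2 ⟨mem_sdiff.2 ⟨this, hpp⟩, hzp⟩)
  have h1 := card_le_card hsub
  have h2 := card_union_le (t.filter (G.Adj z)) {u, v, x, y}
  have h3 : ({u, v, x, y} : Finset V).card ≤ 4 := card_le_four
  unfold degIn at *
  omega

/-- A tight position has an edge `uv` of a maximum matching such that at most
`3(k + 1) + (n - 2)` edges meet `{u, v}`. -/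
lemma exists_good_edge {k : ℕ} {s : Finset V} (hM : HasM G (3 * (k + 1)) s)
    (hval : gameValue G true s ≤ 2 * (k + 1)) :
    ∃ v ∈ s, ∃ u ∈ s, G.Adj u v ∧ HasM G (3 * k + 2) (s \ {u, v}) ∧
      degIn G s v + degIn G (s.erase v) u + 2 ≤ 3 * (k + 1) + s.card := by
  obtain ⟨v, hv, w, hw, hvw, hd⟩ := exists_small_degIn hM hval
  by_contra! hcon
  have hbad : ∀ u ∈ s, G.Adj v u → HasM G (3 * k + 2) (s \ {u, v}) →
      degIn G s v = 3 * k + 4 ∧ ∀ z ∈ s, z ≠ u → G.Adj u z := by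
    intro u hu hvu h
    have h1 := hcon v hv u hu hvu.symm h
    have hue : u ∈ s.erase v := mem_erase.2 ⟨hvu.ne', hu⟩
    have h2 := degIn_le_erase (G := G) hue
    have h3 := card_erase_add_one hv
    refine ⟨by omega, fun z hz hzu => ?_⟩
    by_contra hnot
    have hzv : z ≠ v := by rintro rfl; exact hnot hvu.symm
    have h4 : degIn G (s.erase v) u ≤ (((s.erase v).erase u).erase z).card := by
      refine card_le_card fun p hp => ?_
      obtain ⟨hp, hup⟩ := mem_filter.1 hp
      refine mem_erase.2 ⟨?_, mem_erase.2 ⟨hup.ne', hp⟩⟩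
      rintro rfl
      exact hnot hup
    have h5 := card_erase_add_one hue
    have h6 : z ∈ (s.erase v).erase u := by simp [hz, hzu, hzv]
    have h7 := card_erase_add_one h6
    omega
  obtain ⟨u, hu, hvu, h⟩ := exists_partner (m := 3 * k + 2) hM hw hvw
  obtain ⟨hdeg, hdom⟩ := hbad u hu hvu h
  have hall : ∀ p ∈ s, G.Adj v p → ∀ z ∈ s, z ≠ p → G.Adj p z := fun p hp hvp =>
    (hbad p hp hvp (h.exchange hu hvu.ne' hdom)).2
  obtain ⟨x, hx, y, hy, hxy, -, -, hno⟩ := exists_reply hval hu hv hvu.symm h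
  set t := (s \ {u, v}) \ {x, y} with ht
  have hcs := hM.two_mul_le
  have hct : 2 * (3 * k) + 2 ≤ t.card := by
    have h1 := le_card_sdiff ({u, v} : Finset V) s
    have h2 := le_card_sdiff ({x, y} : Finset V) (s \ {u, v})
    have h3 : ({u, v} : Finset V).card ≤ 2 := card_le_two
    have h4 : ({x, y} : Finset V).card ≤ 2 := card_le_two
    rw [← ht] at h2
    omega
  obtain ⟨z, hz, hdz⟩ := exists_degIn_le hct hno
  have hzs : z ∈ s := by grind
  have hts : t ⊆ s := by grind
  by_cases hvz : G.Adj v z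
  · -- `z` is dominating, so its degree in `t` is `|t| - 1 > 3k`.
    have h1 : t.erase z ⊆ t.filter (G.Adj z) := fun p hp => by
      obtain ⟨hpz, hp⟩ := mem_erase.1 hp
      exact mem_filter.2 ⟨hp, hall z hzs hvz p (hts hp) hpz⟩
    have h2 := card_le_card h1
    have h3 := card_erase_add_one hz
    unfold degIn at hdz
    omega
  · -- `z` is adjacent to the at least `3k + 1` dominating vertices in `t`.
    have h1 : s.filter (G.Adj v) ⊆ t.filter (G.Adj z) ∪ {u, x, y} := fun p hp => by
      obtain ⟨hp, hvp⟩ := mem_filter.1 hp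
      by_cases hpp : p ∈ ({u, x, y} : Finset V)
      · exact mem_union_right _ hpp
      · have hpv := hvp.ne'
        have hzp : z ≠ p := by rintro rfl; exact hvz hvp
        exact mem_union_left _ (mem_filter.2 ⟨by grind, (hall p hp hvp z hzs hzp).symm⟩)
    have h2 := card_le_card h1
    have h3 := card_union_le (t.filter (G.Adj z)) {u, x, y}
    have h4 : ({u, x, y} : Finset V).card ≤ 3 := card_le_three
    unfold degIn at hdz hdeg
    omega

/-- The edge bound for tight positions, doubled: `2|E| ≤ 2C(3k,2) + 6k(n - 3k)`, with the negative
terms moved to the left. -/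
lemma sum_degIn_bound (k : ℕ) : ∀ s : Finset V, HasM G (3 * k) s →
    gameValue G true s ≤ 2 * k →
    ∑ z ∈ s, degIn G s z + (9 * k ^ 2 + 3 * k) ≤ 6 * k * s.card := by
  induction k with
  | zero =>
    intro s _ hval
    have hz : ∀ z ∈ s, degIn G s z = 0 := by
      intro z hz
      by_contra hne
      obtain ⟨y, hy⟩ := card_pos.1 (Nat.pos_of_ne_zero hne)
      obtain ⟨hy, hzy⟩ := mem_filter.1 hy
      have := le_gameValue_true hz hy hzy
      omega
    simp [sum_eq_zero hz]
  | succ k ih =>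
    intro s hM hval
    obtain ⟨v, hv, u, hu, huv, h, hle⟩ := exists_good_edge hM hval
    obtain ⟨x, hx, y, hy, hxy, h', hval', -⟩ := exists_reply hval hu hv huv h
    have hne := huv.ne
    have hne' := hxy.ne
    have hbound := ih _ h' hval'
    have e : (s \ {u, v}) \ {x, y} = (((s.erase v).erase u).erase x).erase y := by grind
    rw [e] at hbound
    have hu1 : u ∈ s.erase v := by grind
    have hx1 : x ∈ (s.erase v).erase u := by grind
    have hy1 : y ∈ ((s.erase v).erase u).erase x := by grind
    have s1 := sum_degIn_erase (G := G) hv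
    have s2 := sum_degIn_erase (G := G) hu1
    have s3 := sum_degIn_erase (G := G) hx1
    have s4 := sum_degIn_erase (G := G) hy1
    rw [degIn_erase_self] at s1 s2 s3 s4
    have c1 := card_erase_add_one hv
    have c2 := card_erase_add_one hu1
    have c3 := card_erase_add_one hx1
    have c4 := card_erase_add_one hy1
    have d3 := degIn_le_erase (G := G) hx1
    have d4 := degIn_le_erase (G := G) hy1
    have c : s.card = ((((s.erase v).erase u).erase x).erase y).card + 4 := by omega
    generalize ((((s.erase v).erase u).erase x).erase y).card = n' at *
    rw [c]
    nlinarith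

end Degrees

/-! ### Matchings as sets of edges -/

lemma IsMatchingSet.hasM (M : Finset (Sym2 V)) : ∀ s : Finset V, IsMatchingSet G M →
    (∀ e ∈ M, ∀ v ∈ e, v ∈ s) → HasM G M.card s := by
  induction M using Finset.induction_on with
  | empty => intros; trivial
  | insert e M he ih =>
    intro s hM hs
    rw [card_insert_of_notMem he]
    induction e using Sym2.ind with
    | _ u v =>
      refine ⟨u, hs _ (mem_insert_self _ _) u (by simp), v, hs _ (mem_insert_self _ _) v (by simp),
        by simpa using hM.1 _ (mem_insert_self _ _), ih _ ⟨?_, ?_⟩ ?_⟩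
      · exact fun e h => hM.1 e (mem_insert_of_mem h)
      · exact fun e h f h' => hM.2 e (mem_insert_of_mem h) f (mem_insert_of_mem h')
      · intro f hf z hz
        have hne : f ≠ s(u, v) := by rintro rfl; exact he hf
        have := hM.2 f (mem_insert_of_mem hf) _ (mem_insert_self _ _) hne z hz
        simp only [Sym2.mem_iff] at this
        refine mem_sdiff.2 ⟨hs f (mem_insert_of_mem hf) z hz, by simpa using this⟩

lemma hasM_matchingNumber [Fintype V] : HasM G (matchingNumber G) univ := by
  have hmem := Nat.sSup_mem (s := {n | ∃ M : Finset (Sym2 V), IsMatchingSet G M ∧ M.card = n})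
    ⟨0, ∅, ⟨by simp, by simp⟩, rfl⟩
    ⟨Fintype.card (Sym2 V), by rintro _ ⟨M, -, rfl⟩; exact card_le_univ M⟩
  obtain ⟨M, hM, hc⟩ := hmem
  have := IsMatchingSet.hasM M univ hM (by simp)
  rw [hc] at this
  exact this

end MatchingGame

/-- if `α'(G) = 3k` and `Max(G) = 2k`, then
`|E(G)| ≤ C(3k,2) + 3k(n - 3k)`. -/
theorem stmt12 {V : Type*} [Fintype V] [DecidableEq V] (G : SimpleGraph V)
    [DecidableRel G.Adj] (k : ℕ)
    (halpha : matchingNumber G = 3 * k) (hmax : gameMax G = 2 * k) :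
    G.edgeFinset.card ≤
      Nat.choose (3 * k) 2 + 3 * k * (Fintype.card V - 3 * k) := by
  have hM : HasM G (3 * k) univ := halpha ▸ hasM_matchingNumber
  have hval : gameValue G true univ = 2 * k := by
    rw [← hmax]; unfold gameMax; congr!
  have hb := sum_degIn_bound k univ hM hval.le
  have hdeg : ∑ z, degIn G univ z = 2 * G.edgeFinset.card := by
    rw [← G.sum_degrees_eq_twice_card_edges]
    refine sum_congr rfl fun z _ => ?_
    rw [← G.card_neighborFinset_eq_degree, G.neighborFinset_eq_filter]
    rfl
  rw [hdeg, card_univ] at hb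
  have hn := hM.two_mul_le
  rw [card_univ] at hn
  obtain ⟨r, hr⟩ : ∃ r, Fintype.card V = 3 * k + r := ⟨_, (Nat.add_sub_cancel' (by omega)).symm⟩
  rw [hr] at hb ⊢
  rw [Nat.add_sub_cancel_left]
  have hch : Nat.choose (3 * k) 2 * 2 + 3 * k = 9 * k ^ 2 := by
    rw [Nat.choose_two_right, ← Finset.sum_range_id, Finset.sum_range_id_mul_two]
    rcases k with _ | k
    · rfl
    · have : 3 * (k + 1) - 1 = 3 * k + 2 := by omega
      rw [this]; ring
  nlinarith
end

section
/- If F is a finite forest (a finite simple graph with no cycles), then 4·Max(F) ≥ 3·α'(F), i.e., Max(F) ≥ (3/4)·α'(F). -/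
/-!
Vertex deletion never increases the value of the game (`gameValue_erase_le`), so it suffices to
bound the game played on the vertex set of a maximum matching `M`, and during the game Max may
discard further vertices whenever convenient. The position is then always a set `s` of remaining
vertices perfectly matched by a partner map `f`.

Call a matching edge `v (f v)` *isolated* if it is a component of the remaining forest. With `m`
matching edges left, `i` of them isolated, Max to move secures `4 * Max ≥ 3 * m + i`
(`four_mul_gameValue`; stated with vertex counts, hence with a factor `2`). If all edges are
isolated this is clear. Otherwise contract the matching edges: the result is a forest with an
edge, so it has a leaf `l (f l)` with a unique neighbour `p (f p)` (`exists_leaf_pair`). Max plays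
the edge `p (f p)`, which isolates `l (f l)`. If Min now plays a matching edge, the round consumes
two matching edges. If Min plays a nonmatching edge `x y`, then discarding `f x` and `f y` the round
consumes three matching edges, none of them isolated, while `l (f l)` has become isolated; so
`3 * m + i` drops by at most `8`, which pays for the two moves.
-/

open Finset

variable {V : Type*} [DecidableEq V]

/-! ### Unfolding the game value -/

section Game

variable (G : SimpleGraph V) [DecidableRel G.Adj]

lemma mem_matchPlays {s : Finset V} {x y : V} :
    (x, y) ∈ matchPlays G s ↔ x ∈ s ∧ y ∈ s ∧ G.Adj x y := by
  simp [matchPlays, and_assoc]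

lemma one_add_le_gameValue_true {s : Finset V} {x y : V} (hx : x ∈ s) (hy : y ∈ s)
    (h : G.Adj x y) : 1 + gameValue G false (s \ {x, y}) ≤ gameValue G true s := by
  have hm : (x, y) ∈ matchPlays G s := (mem_matchPlays G).2 ⟨hx, hy, h⟩
  rw [gameValue.eq_def G true s, dif_pos ⟨_, hm⟩, if_pos rfl]
  exact Finset.le_sup (f := fun p : {p // p ∈ matchPlays G s} =>
    1 + gameValue G false (s \ {p.1.1, p.1.2})) (mem_attach _ ⟨(x, y), hm⟩)

lemma gameValue_false_le {s : Finset V} {x y : V} (hx : x ∈ s) (hy : y ∈ s)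
    (h : G.Adj x y) : gameValue G false s ≤ 1 + gameValue G true (s \ {x, y}) := by
  have hm : (x, y) ∈ matchPlays G s := (mem_matchPlays G).2 ⟨hx, hy, h⟩
  rw [gameValue.eq_def G false s, dif_pos ⟨_, hm⟩, if_neg (by simp)]
  exact Finset.inf'_le (f := fun p : {p // p ∈ matchPlays G s} =>
    1 + gameValue G true (s \ {p.1.1, p.1.2})) (mem_attach _ ⟨(x, y), hm⟩)

/-- Either no edge remains and the value is `0`, or the player to move has an optimal move. -/
lemma gameValue_cases (b : Bool) (s : Finset V) :
    ((∀ x ∈ s, ∀ y ∈ s, ¬ G.Adj x y) ∧ gameValue G b s = 0) ∨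
      ∃ x ∈ s, ∃ y ∈ s, G.Adj x y ∧ gameValue G b s = 1 + gameValue G (!b) (s \ {x, y}) := by
  by_cases h : (matchPlays G s).Nonempty
  · right
    cases b
    · rw [gameValue.eq_def G false s, dif_pos h, if_neg (by simp)]
      obtain ⟨⟨⟨x, y⟩, hp⟩, -, he⟩ := Finset.exists_mem_eq_inf'
        (s := (matchPlays G s).attach) (by simpa using h)
        (fun p => 1 + gameValue G true (s \ {p.1.1, p.1.2}))
      obtain ⟨hx, hy, ha⟩ := (mem_matchPlays G).1 hp
      exact ⟨x, hx, y, hy, ha, he⟩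
    · rw [gameValue.eq_def G true s, dif_pos h, if_pos rfl]
      obtain ⟨⟨⟨x, y⟩, hp⟩, -, he⟩ := Finset.exists_mem_eq_sup
        (matchPlays G s).attach (by simpa using h)
        (fun p => 1 + gameValue G false (s \ {p.1.1, p.1.2}))
      obtain ⟨hx, hy, ha⟩ := (mem_matchPlays G).1 hp
      exact ⟨x, hx, y, hy, ha, he⟩
  · left
    refine ⟨fun x hx y hy ha => h ⟨_, (mem_matchPlays G).2 ⟨hx, hy, ha⟩⟩, ?_⟩
    rw [gameValue.eq_def, dif_neg h]

/-! ### Monotonicity under vertex deletion -/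

lemma gameValue_le_erase_of_isolated (s : Finset V) :
    ∀ (w : V) (b : Bool), (∀ x ∈ s, ¬ G.Adj w x) →
      gameValue G b s ≤ gameValue G b (s.erase w) := by
  induction s using Finset.strongInduction with
  | H s ih =>
    intro w b hw
    have key : ∀ x y, (s \ {x, y}).erase w = s.erase w \ {x, y} := by
      intro x y; ext z; simp only [mem_erase, mem_sdiff]; tauto
    have hsub : ∀ x ∈ s, ∀ y, s \ {x, y} ⊂ s := fun x hx y =>
      ⟨sdiff_subset, fun h => by simpa using h hx⟩
    have hne : ∀ x ∈ s, ∀ y ∈ s, G.Adj x y → x ≠ w ∧ y ≠ w := by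
      intro x hx y hy h
      exact ⟨fun e => hw y hy (e ▸ h), fun e => hw x hx (e ▸ h.symm)⟩
    cases b
    · rcases gameValue_cases G false (s.erase w) with ⟨h0, he⟩ | ⟨x, hx, y, hy, h, he⟩
      · rcases gameValue_cases G false s with ⟨-, he'⟩ | ⟨x, hx, y, hy, h, -⟩
        · omega
        · obtain ⟨h1, h2⟩ := hne x hx y hy h
          exact absurd h (h0 x (mem_erase.2 ⟨h1, hx⟩) y (mem_erase.2 ⟨h2, hy⟩))
      · have hx' := mem_of_mem_erase hx
        have := gameValue_false_le G hx' (mem_of_mem_erase hy) h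
        have := ih _ (hsub x hx' y) w true (fun z hz => hw z (sdiff_subset hz))
        rw [key] at this
        simp only [Bool.not_false] at he
        omega
    · rcases gameValue_cases G true s with ⟨-, he⟩ | ⟨x, hx, y, hy, h, he⟩
      · omega
      · obtain ⟨h1, h2⟩ := hne x hx y hy h
        have := one_add_le_gameValue_true G (mem_erase.2 ⟨h1, hx⟩) (mem_erase.2 ⟨h2, hy⟩) h
        have := ih _ (hsub x hx y) w false (fun z hz => hw z (sdiff_subset hz))
        rw [key] at this
        simp only [Bool.not_true] at he
        omega

lemma sdiff_pair_eq_erase (s : Finset V) (x y : V) : s \ {x, y} = (s.erase x).erase y := by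
  ext z; simp only [mem_erase, mem_sdiff, mem_insert, mem_singleton]; tauto

/-- Deleting a vertex does not increase the value. Max imitates on `s` the play on `s.erase v`
until Min uses `v`, say with the edge `v w`. At that point Min could have played an edge at `w` on the
smaller graph, deleting even more vertices; or `w` is isolated there, and deleting it changes
nothing, while any move of Min adds one edge and deletes vertices. -/
lemma gameValue_erase_le (s : Finset V) :
    ∀ (v : V) (b : Bool), gameValue G b (s.erase v) ≤ gameValue G b s := by
  induction s using Finset.strongInduction with
  | H s ih =>
    intro v b
    by_cases hv : v ∈ s
    swap
    · rw [erase_eq_of_notMem hv]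
    have key : ∀ x y, (s \ {x, y}).erase v = s.erase v \ {x, y} := by
      intro x y; ext z; simp only [mem_erase, mem_sdiff]; tauto
    have hsub : ∀ x ∈ s, ∀ y, s \ {x, y} ⊂ s := fun x hx y =>
      ⟨sdiff_subset, fun h => by simpa using h hx⟩
    have hlt : s.erase v ⊂ s := erase_ssubset hv
    cases b
    -- Min to move: `reply` compares the games once Min has played an edge `v w` on `s`
    · have reply : ∀ w ∈ s.erase v, gameValue G false (s.erase v) ≤
          1 + gameValue G true ((s.erase v).erase w) := by
        intro w hw
        by_cases hz : ∃ z ∈ s.erase v, G.Adj w z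
        · obtain ⟨z, hz, h⟩ := hz
          have h1 := gameValue_false_le G hw hz h
          rw [sdiff_pair_eq_erase] at h1
          have h2 := ih _ ((erase_ssubset hw).trans hlt) z true
          omega
        · have hz : ∀ x ∈ s.erase v, ¬ G.Adj w x := fun x hx h => hz ⟨x, hx, h⟩
          have h1 := gameValue_le_erase_of_isolated G _ w true hz
          rcases gameValue_cases G false (s.erase v) with ⟨-, he⟩ | ⟨x, hx, y, hy, h, he⟩
          · omega
          · rw [sdiff_pair_eq_erase, Bool.not_false] at he
            have h2 := ih _ ((erase_ssubset hx).trans hlt) y true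
            have h3 := ih _ hlt x true
            omega
      rcases gameValue_cases G false s with ⟨h0, he⟩ | ⟨x, hx, y, hy, h, he⟩
      · rcases gameValue_cases G false (s.erase v) with ⟨-, he'⟩ | ⟨x, hx, y, hy, h, -⟩
        · omega
        · exact absurd h (h0 x (mem_of_mem_erase hx) y (mem_of_mem_erase hy))
      · rw [Bool.not_false] at he
        by_cases hxv : x = v
        · subst hxv
          have := reply y (mem_erase.2 ⟨h.ne', hy⟩)
          rw [← sdiff_pair_eq_erase] at this
          omega
        by_cases hyv : y = v
        · subst hyv
          have := reply x (mem_erase.2 ⟨h.ne, hx⟩)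
          rw [← sdiff_pair_eq_erase, pair_comm] at this
          omega
        have h1 := gameValue_false_le G (mem_erase.2 ⟨hxv, hx⟩) (mem_erase.2 ⟨hyv, hy⟩) h
        have h2 := ih _ (hsub x hx y) v true
        rw [key] at h2
        omega
    · rcases gameValue_cases G true (s.erase v) with ⟨-, he⟩ | ⟨x, hx, y, hy, h, he⟩
      · omega
      · have hx' := mem_of_mem_erase hx
        have h1 := one_add_le_gameValue_true G hx' (mem_of_mem_erase hy) h
        have h2 := ih _ (hsub x hx' y) v false
        rw [key] at h2
        rw [Bool.not_true] at he
        omega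

lemma gameValue_mono {s t : Finset V} (h : t ⊆ s) (b : Bool) :
    gameValue G b t ≤ gameValue G b s := by
  induction s using Finset.strongInduction with
  | H s ih =>
    rcases h.eq_or_ssubset with rfl | hlt
    · exact le_rfl
    · obtain ⟨x, hx, hxt⟩ := exists_of_ssubset hlt
      exact (ih _ (erase_ssubset hx) (subset_erase.2 ⟨h, hxt⟩)).trans (gameValue_erase_le G s x b)

/-! ### Perfectly matched positions -/

/-- `f` sends every vertex of `s` to its partner in a perfect matching of `G` on `s`. -/
def IsPartner (f : V → V) (s : Finset V) : Prop :=
  ∀ v ∈ s, f v ∈ s ∧ G.Adj v (f v) ∧ f (f v) = v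

/-- The vertices of `s` whose matching edge `v (f v)` is a component of the graph on `s`. -/
def isolatedVerts (f : V → V) (s : Finset V) : Finset V :=
  s.filter fun v => (∀ w ∈ s, G.Adj v w → w = f v) ∧ ∀ w ∈ s, G.Adj (f v) w → w = v

variable {G}

lemma IsPartner.sdiff {f : V → V} {s : Finset V} (hf : IsPartner G f s) {x : V} (hx : x ∈ s) :
    IsPartner G f (s \ {x, f x}) := by
  intro v hv
  simp only [mem_sdiff, mem_insert, mem_singleton, not_or] at hv ⊢
  obtain ⟨h1, h2, h3⟩ := hf v hv.1
  have := (hf x hx).2.2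
  refine ⟨⟨h1, fun e => hv.2.2 ?_, fun e => hv.2.1 ?_⟩, h2, h3⟩
  · rw [← e, h3]
  · rw [← h3, e, this]

lemma mem_isolatedVerts {f : V → V} {s : Finset V} {v : V} :
    v ∈ isolatedVerts G f s ↔
      v ∈ s ∧ (∀ w ∈ s, G.Adj v w → w = f v) ∧ ∀ w ∈ s, G.Adj (f v) w → w = v := by
  simp [isolatedVerts]

lemma isolatedVerts_subset_sdiff {f : V → V} {s t : Finset V} :
    isolatedVerts G f s \ t ⊆ isolatedVerts G f (s \ t) := by
  intro v hv
  simp only [mem_sdiff, mem_isolatedVerts] at hv ⊢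
  exact ⟨⟨hv.1.1, hv.2⟩, fun w hw => hv.1.2.1 w hw.1, fun w hw => hv.1.2.2 w hw.1⟩

/-- A nonempty finite forest has fewer edges than vertices, as a bound on the degree sum. -/
lemma sum_degree_lt (hG : G.IsAcyclic) {s : Finset V} (hs : s.Nonempty) :
    ∑ v ∈ s, #(s.filter (G.Adj v)) < 2 * #s := by
  classical
  let H : SimpleGraph s := G.comap (Function.Embedding.subtype _)
  have hH : H.IsAcyclic := hG.of_comap _
  have : Nonempty s := hs.to_subtype
  obtain ⟨T, hHT, -, hT⟩ := SimpleGraph.connected_top.exists_isTree_le_of_le_of_isAcyclic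
    (le_top : H ≤ ⊤) hH
  have h1 := hT.card_edgeFinset
  have h2 : #H.edgeFinset ≤ #T.edgeFinset := card_le_card (SimpleGraph.edgeFinset_mono hHT)
  have h3 := H.sum_degrees_eq_twice_card_edges
  rw [Fintype.card_coe] at h1
  have h4 : ∀ v : s, H.degree v = #(s.filter (G.Adj v)) := by
    intro v
    rw [← SimpleGraph.card_neighborFinset_eq_degree]
    refine card_bij (fun w _ => (w : V)) ?_ (fun _ _ _ _ h => Subtype.ext h) ?_
    · intro w hw
      rw [SimpleGraph.mem_neighborFinset] at hw
      exact mem_filter.2 ⟨w.2, hw⟩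
    · intro w hw
      obtain ⟨hw, h⟩ := mem_filter.1 hw
      exact ⟨⟨w, hw⟩, by rw [SimpleGraph.mem_neighborFinset]; exact h, rfl⟩
  rw [← sum_coe_sort s (fun v => #(s.filter (G.Adj v))), ← Finset.sum_congr rfl fun v _ => h4 v]
  omega

lemma apply_mem_isolatedVerts {f : V → V} {s : Finset V} (hf : IsPartner G f s) {v : V}
    (hv : v ∈ isolatedVerts G f s) : f v ∈ isolatedVerts G f s := by
  rw [mem_isolatedVerts] at hv ⊢
  obtain ⟨h1, -, h2⟩ := hf v hv.1
  exact ⟨h1, by rw [h2]; exact hv.2.2, by rw [h2]; exact hv.2.1⟩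

/-- A leaf of the forest obtained by contracting the matching edges: among the pairs that are not
isolated, the degrees of the two ends of some pair sum to at most `3`, so that exactly one edge
leaves the pair. -/
lemma exists_leaf_pair (hG : G.IsAcyclic) {f : V → V} {s : Finset V} (hf : IsPartner G f s)
    (hne : isolatedVerts G f s ≠ s) :
    ∃ l ∈ s, ∃ p ∈ s, l ∉ isolatedVerts G f s ∧ p ∉ isolatedVerts G f s ∧ p ≠ l ∧ p ≠ f l ∧
      (∀ w ∈ s, G.Adj l w → w = f l ∨ w = p) ∧ ∀ w ∈ s, G.Adj (f l) w → w = l ∨ w = p := by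
  set t := s \ isolatedVerts G f s with ht
  have hts : t ⊆ s := sdiff_subset
  have htne : t.Nonempty := by
    rw [nonempty_iff_ne_empty, ht, Ne, sdiff_eq_empty_iff_subset]
    exact fun h => hne ((filter_subset _ _).antisymm h)
  have hft : ∀ v ∈ t, f v ∈ t := by
    intro v hv
    rw [ht, mem_sdiff] at hv ⊢
    refine ⟨(hf v hv.1).1, fun h => hv.2 ?_⟩
    rw [← (hf v hv.1).2.2]
    exact apply_mem_isolatedVerts hf h
  have hcl : ∀ v ∈ t, ∀ w ∈ s, G.Adj v w → w ∈ t := by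
    intro v hv w hw h
    by_cases hvw : w = f v
    · exact hvw ▸ hft v hv
    rw [ht, mem_sdiff]
    refine ⟨hw, fun hi => hvw ?_⟩
    rw [mem_isolatedVerts] at hi
    rw [hi.2.1 v (hts hv) h.symm, (hf w hw).2.2]
  have hsum : ∑ v ∈ t, #(t.filter (G.Adj (f v))) = ∑ v ∈ t, #(t.filter (G.Adj v)) :=
    sum_nbij' f f hft hft (fun v hv => (hf v (hts hv)).2.2) (fun v hv => (hf v (hts hv)).2.2)
      (fun v hv => rfl)
  have hlt := sum_degree_lt hG htne
  obtain ⟨l, hl, hd⟩ : ∃ l ∈ t, #(t.filter (G.Adj l)) + #(t.filter (G.Adj (f l))) < 4 := by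
    by_contra! h
    have := sum_le_sum h
    rw [sum_const, sum_add_distrib, hsum, smul_eq_mul] at this
    omega
  obtain ⟨hfl, hadj, hffl⟩ := hf l (hts hl)
  have hl' := hft l hl
  have hc1 : #((t.filter (G.Adj l)).erase (f l)) + 1 = #(t.filter (G.Adj l)) :=
    card_erase_add_one (mem_filter.2 ⟨hl', hadj⟩)
  have hc2 : #((t.filter (G.Adj (f l))).erase l) + 1 = #(t.filter (G.Adj (f l))) :=
    card_erase_add_one (mem_filter.2 ⟨hl, hadj.symm⟩)
  -- the set of neighbours of the pair outside the pair
  set o := (t.filter (G.Adj l)).erase (f l) ∪ (t.filter (G.Adj (f l))).erase l with ho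
  have hoc : #o ≤ 1 := (card_union_le _ _).trans (by omega)
  have ho1 : ∀ w ∈ s, G.Adj l w → w = f l ∨ w ∈ o := by
    intro w hw h
    have := hcl l hl w hw h
    by_cases e : w = f l
    · exact .inl e
    · exact .inr (mem_union_left _ (mem_erase.2 ⟨e, mem_filter.2 ⟨this, h⟩⟩))
  have ho2 : ∀ w ∈ s, G.Adj (f l) w → w = l ∨ w ∈ o := by
    intro w hw h
    have := hcl _ hl' w hw h
    by_cases e : w = l
    · exact .inl e
    · exact .inr (mem_union_right _ (mem_erase.2 ⟨e, mem_filter.2 ⟨this, h⟩⟩))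
  have hli : l ∉ isolatedVerts G f s := (mem_sdiff.1 hl).2
  obtain ⟨p, hp⟩ : o.Nonempty := by
    rw [nonempty_iff_ne_empty]
    intro e
    simp only [e, notMem_empty, or_false] at ho1 ho2
    exact hli (mem_isolatedVerts.2 ⟨hts hl, ho1, ho2⟩)
  have hpt : p ∈ t ∧ p ≠ l ∧ p ≠ f l := by
    rw [ho, mem_union, mem_erase, mem_erase, mem_filter, mem_filter] at hp
    rcases hp with ⟨h1, h2, h3⟩ | ⟨h1, h2, h3⟩
    · exact ⟨h2, h3.ne', h1⟩
    · exact ⟨h2, h1, h3.ne'⟩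
  have hu : ∀ w ∈ o, w = p := fun w hw => card_le_one.1 hoc w hw p hp
  exact ⟨l, hts hl, p, hts hpt.1, hli, (mem_sdiff.1 hpt.1).2, hpt.2.1, hpt.2.2,
    fun w hw h => (ho1 w hw h).imp_right (hu w), fun w hw h => (ho2 w hw h).imp_right (hu w)⟩

/-! ### The strategy of Max -/

/-- After a move of Min the potential `3 * #s + #(isolatedVerts G f s)` has dropped by at most `12`,
and by at most `8` if all matching edges were isolated; the move itself accounts for `8`. -/
lemma min_step {f : V → V} {s : Finset V} (hf : IsPartner G f s)
    (ih : ∀ t, t ⊂ s → IsPartner G f t →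
      3 * #t + #(isolatedVerts G f t) ≤ 8 * gameValue G true t) :
    3 * #s + #(isolatedVerts G f s) ≤ 8 * gameValue G false s + 4 ∧
      (isolatedVerts G f s = s → 3 * #s + #(isolatedVerts G f s) ≤ 8 * gameValue G false s) := by
  rcases gameValue_cases G false s with ⟨h0, -⟩ | ⟨x, hx, y, hy, h, he⟩
  · have : s = ∅ := eq_empty_of_forall_notMem fun v hv =>
      h0 v hv (f v) (hf v hv).1 (hf v hv).2.1
    subst this
    simp [isolatedVerts]
  rw [Bool.not_false] at he
  by_cases hxy : y = f x
  · subst hxy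
    have hss : s \ {x, f x} ⊂ s := ⟨sdiff_subset, fun h => by simpa using h hx⟩
    have h1 := ih _ hss (hf.sdiff hx)
    have h2 := card_le_card (isolatedVerts_subset_sdiff (G := G) (f := f) (s := s) (t := {x, f x}))
    have h3 := le_card_sdiff {x, f x} (isolatedVerts G f s)
    have h4 := le_card_sdiff {x, f x} s
    have h5 : #({x, f x} : Finset V) ≤ 2 := card_le_two
    omega
  · obtain ⟨hfx, hax, hffx⟩ := hf x hx
    obtain ⟨hfy, hay, hffy⟩ := hf y hy
    have hxi : x ∉ isolatedVerts G f s := fun hi => hxy ((mem_isolatedVerts.1 hi).2.1 y hy h)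
    have hyi : y ∉ isolatedVerts G f s := fun hi => hxy <| by
      rw [(mem_isolatedVerts.1 hi).2.1 x hx h.symm, hffy]
    have hfxi : f x ∉ isolatedVerts G f s := fun hi => hxi <| by
      rw [← hffx]; exact apply_mem_isolatedVerts hf hi
    have hfyi : f y ∉ isolatedVerts G f s := fun hi => hyi <| by
      rw [← hffy]; exact apply_mem_isolatedVerts hf hi
    -- the partners of `x` and `y` are discarded
    set q : Finset V := {x, f x} ∪ {y, f y} with hq
    have hys : y ∈ s \ {x, f x} := by simp [hy, hxy, h.ne']
    have hpart : IsPartner G f (s \ q) := by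
      rw [hq, ← sup_eq_union, ← sdiff_sdiff_left]
      exact (hf.sdiff hx).sdiff hys
    have hss : s \ q ⊂ s := ⟨sdiff_subset, fun h => by simpa [hq] using h hx⟩
    have h1 := ih _ hss hpart
    have h2 := card_le_card (isolatedVerts_subset_sdiff (G := G) (f := f) (s := s) (t := q))
    have h3 : isolatedVerts G f s \ q = isolatedVerts G f s := by
      rw [Finset.sdiff_eq_self_iff_disjoint, disjoint_right]
      intro z hz
      simp only [hq, mem_union, mem_insert, mem_singleton] at hz
      rcases hz with (rfl | rfl) | (rfl | rfl) <;> assumption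
    rw [h3] at h2
    have h4 := le_card_sdiff q s
    have h5 : #q ≤ 4 := (card_union_le _ _).trans (Nat.add_le_add card_le_two card_le_two)
    have h6 : gameValue G true (s \ q) ≤ gameValue G true (s \ {x, y}) := by
      refine gameValue_mono G (sdiff_subset_sdiff le_rfl ?_) true
      intro z hz
      simp only [hq, mem_union, mem_insert, mem_singleton] at hz ⊢
      tauto
    exact ⟨by omega, fun e => absurd hx (e ▸ hxi)⟩

/-- Max secures `4 * Max ≥ 3 * m + i`, where `#s = 2 * m` and `i` is the number of isolated
matching edges. -/
lemma four_mul_gameValue (hG : G.IsAcyclic) (f : V → V) (s : Finset V) (hf : IsPartner G f s) :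
    3 * #s + #(isolatedVerts G f s) ≤ 8 * gameValue G true s := by
  induction s using Finset.strongInduction with
  | H s ih =>
    rcases s.eq_empty_or_nonempty with rfl | ⟨a, ha⟩
    · simp [isolatedVerts]
    have step : ∀ p ∈ s, 1 + gameValue G false (s \ {p, f p}) ≤ gameValue G true s := fun p hp =>
      one_add_le_gameValue_true G hp (hf p hp).1 (hf p hp).2.1
    have hmin := fun p (hp : p ∈ s) => min_step (hf.sdiff hp) fun t ht =>
      ih t (ht.trans_subset sdiff_subset)
    have hsub := fun p => isolatedVerts_subset_sdiff (G := G) (f := f) (s := s) (t := {p, f p})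
    have hcard := fun p => le_card_sdiff {p, f p} s
    have hpair : ∀ p, #({p, f p} : Finset V) ≤ 2 := fun p => card_le_two
    by_cases hne : isolatedVerts G f s = s
    · have h1 := step a ha
      have h2 := hsub a
      rw [hne] at h2
      have h3 := h2.antisymm (filter_subset _ _)
      have h4 := (hmin a ha).2 h3.symm
      rw [← h3] at h4
      have := hcard a
      have := hpair a
      rw [hne]
      omega
    · obtain ⟨l, hl, p, hp, hli, hpi, hpl, hpfl, h1, h2⟩ := exists_leaf_pair hG hf hne
      obtain ⟨hfl, hal, hffl⟩ := hf l hl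
      obtain ⟨hfp, hap, hffp⟩ := hf p hp
      have hfpi : f p ∉ isolatedVerts G f s := fun hi => hpi <| by
        rw [← hffp]; exact apply_mem_isolatedVerts hf hi
      have hfli : f l ∉ isolatedVerts G f s := fun hi => hli <| by
        rw [← hffl]; exact apply_mem_isolatedVerts hf hi
      have hlI : l ∈ isolatedVerts G f (s \ {p, f p}) := by
        simp only [mem_isolatedVerts, mem_sdiff, mem_insert, mem_singleton, not_or]
        refine ⟨⟨hl, hpl.symm, fun e => hpfl (by rw [e, hffp])⟩, fun w hw h => ?_, fun w hw h => ?_⟩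
        · exact (h1 w hw.1 h).resolve_right hw.2.1
        · exact (h2 w hw.1 h).resolve_right hw.2.1
      have hflI := apply_mem_isolatedVerts (hf.sdiff hp) hlI
      have h3 : insert l (insert (f l) (isolatedVerts G f s)) ⊆
          isolatedVerts G f (s \ {p, f p}) := by
        refine insert_subset hlI (insert_subset hflI fun z hz => hsub p (mem_sdiff.2 ⟨hz, ?_⟩))
        simp only [mem_insert, mem_singleton]
        rintro (rfl | rfl)
        · exact hpi hz
        · exact hfpi hz
      have h4 := card_le_card h3
      rw [card_insert_of_notMem (by simp [hal.ne, hli]), card_insert_of_notMem hfli] at h4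
      have := step p hp
      have := (hmin p hp).1
      have := hcard p
      have := hpair p
      omega

end Game

/-- A maximum matching exists and yields a perfectly matched vertex set of twice its size. -/
lemma exists_partner_s13 [Fintype V] (F : SimpleGraph V) :
    ∃ (f : V → V) (s : Finset V), IsPartner F f s ∧ #s = 2 * matchingNumber F := by
  classical
  obtain ⟨M, ⟨hE, hM⟩, hc⟩ : matchingNumber F ∈
      {n | ∃ M : Finset (Sym2 V), IsMatchingSet F M ∧ M.card = n} := by
    refine Nat.sSup_mem ⟨0, ∅, by simp [IsMatchingSet], rfl⟩ ⟨#(univ : Finset (Sym2 V)), ?_⟩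
    rintro n ⟨M, -, rfl⟩
    exact card_le_card (subset_univ M)
  have hex : ∀ v, ∃ w, v ∈ M.biUnion Sym2.toFinset → s(v, w) ∈ M := by
    intro v
    by_cases hv : v ∈ M.biUnion Sym2.toFinset
    · obtain ⟨e, he, hve⟩ := mem_biUnion.1 hv
      obtain ⟨w, rfl⟩ := Sym2.mem_toFinset.1 hve
      exact ⟨w, fun _ => he⟩
    · exact ⟨v, fun h => absurd h hv⟩
  choose f hf using hex
  have hfs : ∀ v ∈ M.biUnion Sym2.toFinset, f v ∈ M.biUnion Sym2.toFinset := fun v hv =>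
    mem_biUnion.2 ⟨_, hf v hv, by simp⟩
  refine ⟨f, M.biUnion Sym2.toFinset, fun v hv => ⟨hfs v hv, hE _ (hf v hv), ?_⟩, ?_⟩
  · have h1 := hf v hv
    have h2 := hf (f v) (hfs v hv)
    have h3 : s(v, f v) = s(f v, f (f v)) := by
      by_contra hne
      exact hM _ h1 _ h2 hne (f v) (by simp) (by simp)
    rw [Sym2.eq_swap] at h3
    exact (Sym2.congr_right.1 h3).symm
  · rw [card_biUnion, sum_congr rfl fun e he =>
      Sym2.card_toFinset_of_not_isDiag e (F.not_isDiag_of_mem_edgeSet (hE e he)), sum_const, hc,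
      smul_eq_mul, mul_comm]
    intro e he e' he' hne
    rw [Function.onFun, disjoint_left]
    intro v hv hv'
    exact hM e he e' he' hne v (Sym2.mem_toFinset.1 hv) (Sym2.mem_toFinset.1 hv')

/-- `Max(F) ≥ (3/4)·α'(F)` for every forest `F`. -/
theorem stmt13 {V : Type*} [Fintype V] [DecidableEq V] (F : SimpleGraph V)
    (hF : F.IsAcyclic) :
    3 * matchingNumber F ≤ 4 * gameMax F := by
  let : DecidableRel F.Adj := Classical.decRel _
  obtain ⟨f, s, hf, hs⟩ := exists_partner_s13 F
  have h1 := four_mul_gameValue hF f s hf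
  have h2 : gameValue F true s ≤ gameMax F := gameValue_mono F (subset_univ s) true
  omega
end

section
/- Let n be a positive multiple of 8 and let F be a forest on n vertices that has exactly n/2 leaves (vertices of degree 1), such that all leaves of F are covered by a collection of n/4 pairwise vertex-disjoint subgraphs of F each isomorphic to the path P_4 on 4 vertices. Then Max(F) = (3/8)·n, and this equals (3/4)·α'(F). -/
/-!
Counting leaves forces the structure of `F`: the `n/4` paths span `F`, an inner vertex of a path
is not a leaf, so both ends of every path are leaves. Hence `F` is the corona of the forest `H`
induced by the set `B` of the `n/2` inner vertices: every `b ∈ B` carries exactly one pendant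
leaf `ℓ b`, and the middle edges of the paths form a perfect matching `b ↦ σ b` of `H`.

A finished game covers every vertex of `B`, so the final matching has `|B|` minus (number of
played edges of `H`) edges. Thus Max wants few and Min wants many edges of `H` to be played.

* Max can hold this number to a quarter of the number `N` of non-isolated vertices of `H`
  (`le_gameValue`): matching the neighbour of an end vertex of `H` with its pendant leaf lowers `N`
  by at least two, and so does every edge of `H` which Min plays.
* Min can force a quarter of the number `T` of vertices `b` for which both `b` and `σ b` remain
  (`gameValue_le`): Min always plays an edge `{b, σ b}`, lowering `T` by two, while a pendant edge
  played by Max lowers `T` by at most two, and an edge of `H` played by Max lowers it by at most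
  four but counts for Min.

Initially `N = T = |B| = n/2`, which gives `n/2 - n/8 = 3n/8`. The pendant edges form a maximum
matching, of size `n/2`, because every edge meets `B`.
-/

open Finset

variable {V : Type*} [DecidableEq V]

namespace MatchingGame

/-! ### Unfolding the game value -/

section Unfold

variable {G : SimpleGraph V} [DecidableRel G.Adj] {s : Finset V}

omit [DecidableEq V] in
lemma mem_matchPlays {x y : V} :
    (x, y) ∈ matchPlays G s ↔ x ∈ s ∧ y ∈ s ∧ G.Adj x y := by
  simp [matchPlays, and_assoc]

lemma le_gameValue_true {x y : V} (h : (x, y) ∈ matchPlays G s) :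
    1 + gameValue G false (s \ {x, y}) ≤ gameValue G true s := by
  rw [gameValue.eq_1 G true, dif_pos ⟨_, h⟩, if_pos rfl]
  exact Finset.le_sup (s := (matchPlays G s).attach)
    (f := fun p => 1 + gameValue G false (s \ {p.1.1, p.1.2})) (mem_attach _ ⟨(x, y), h⟩)

lemma gameValue_true_le {m : ℕ}
    (h : ∀ x y, (x, y) ∈ matchPlays G s → 1 + gameValue G false (s \ {x, y}) ≤ m) :
    gameValue G true s ≤ m := by
  rw [gameValue.eq_1 G true]
  by_cases h1 : (matchPlays G s).Nonempty
  · rw [dif_pos h1, if_pos rfl]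
    exact Finset.sup_le fun p _ => h _ _ p.2
  · rw [dif_neg h1]
    exact Nat.zero_le _

lemma gameValue_false_le {x y : V} (h : (x, y) ∈ matchPlays G s) :
    gameValue G false s ≤ 1 + gameValue G true (s \ {x, y}) := by
  rw [gameValue.eq_1 G false, dif_pos ⟨_, h⟩, if_neg (by simp)]
  exact Finset.inf'_le (s := (matchPlays G s).attach)
    (fun p => 1 + gameValue G true (s \ {p.1.1, p.1.2})) (mem_attach _ ⟨(x, y), h⟩)

lemma le_gameValue_false {m : ℕ} (hne : (matchPlays G s).Nonempty)
    (h : ∀ x y, (x, y) ∈ matchPlays G s → m ≤ 1 + gameValue G true (s \ {x, y})) :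
    m ≤ gameValue G false s := by
  rw [gameValue.eq_1 G false, dif_pos hne, if_neg (by simp)]
  exact Finset.le_inf' _ _ fun p _ => h _ _ p.2

lemma gameValue_eq_zero {t : Bool} (h : ¬ (matchPlays G s).Nonempty) :
    gameValue G t s = 0 := by
  rw [gameValue.eq_1, dif_neg h]

end Unfold

/-! ### Coronas -/

/-- `F` is a corona with core `B`: each `b ∈ B` has a pendant neighbour `ℓ b` outside `B`, whose
only neighbour is `b`, and every vertex outside `B` is of the form `ℓ b`. -/
structure IsCorona (F : SimpleGraph V) (B : Finset V) (ℓ : V → V) : Prop where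
  adj : ∀ b ∈ B, F.Adj b (ℓ b)
  notMem : ∀ b ∈ B, ℓ b ∉ B
  unique : ∀ b ∈ B, ∀ w, F.Adj (ℓ b) w → w = b
  exists_eq : ∀ v ∉ B, ∃ b ∈ B, v = ℓ b

/-- A position `s` is full if each remaining core vertex still has its pendant leaf. -/
def IsFull (B : Finset V) (ℓ : V → V) (s : Finset V) : Prop :=
  ∀ b ∈ B, b ∈ s → ℓ b ∈ s

namespace IsCorona

variable {F : SimpleGraph V} {B s : Finset V} {ℓ : V → V}

omit [DecidableEq V] in
lemma injOn (h : IsCorona F B ℓ) {b c : V} (hb : b ∈ B) (hc : c ∈ B) (e : ℓ b = ℓ c) : b = c :=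
  h.unique c hc b (e ▸ (h.adj b hb).symm)

omit [DecidableEq V] in
lemma mem_or_mem (h : IsCorona F B ℓ) {x y : V} (hxy : F.Adj x y) : x ∈ B ∨ y ∈ B := by
  by_contra! hc
  obtain ⟨b, hb, rfl⟩ := h.exists_eq x hc.1
  exact hc.2 (h.unique b hb y hxy ▸ hb)

lemma pendant_mem_matchPlays [DecidableRel F.Adj] (h : IsCorona F B ℓ) (hs : IsFull B ℓ s)
    {b : V} (hb : b ∈ s ∩ B) : (b, ℓ b) ∈ matchPlays F s := by
  rw [mem_inter] at hb
  exact mem_matchPlays.2 ⟨hb.1, hs b hb.2 hb.1, h.adj b hb.2⟩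

lemma core_after_pendant (h : IsCorona F B ℓ) {b : V} (hb : b ∈ B) :
    (s \ {b, ℓ b}) ∩ B = (s ∩ B).erase b := by
  ext x
  have := h.notMem b hb
  simp only [mem_inter, mem_sdiff, mem_insert, mem_singleton, mem_erase]
  grind

lemma core_after_edge {b c : V} :
    (s \ {b, c}) ∩ B = ((s ∩ B).erase b).erase c := by
  ext x
  simp only [mem_inter, mem_sdiff, mem_insert, mem_singleton, mem_erase]
  grind

lemma isFull_pendant (h : IsCorona F B ℓ) (hs : IsFull B ℓ s) {b : V} (hb : b ∈ B) :
    IsFull B ℓ (s \ {b, ℓ b}) := by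
  intro c hc hcs
  have h1 := h.notMem c hc
  simp only [mem_sdiff, mem_insert, mem_singleton, not_or] at hcs ⊢
  exact ⟨hs c hc hcs.1, fun e => h1 (e ▸ hb), fun e => hcs.2.1 (h.injOn hc hb e)⟩

lemma isFull_edge (h : IsCorona F B ℓ) (hs : IsFull B ℓ s) {b c : V} (hb : b ∈ B) (hc : c ∈ B) :
    IsFull B ℓ (s \ {b, c}) := by
  intro d hd hds
  have h1 := h.notMem d hd
  simp only [mem_sdiff, mem_insert, mem_singleton, not_or] at hds ⊢
  exact ⟨hs d hd hds.1, fun e => h1 (e ▸ hb), fun e => h1 (e ▸ hc)⟩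

/-- A move removes from the core either one vertex (pendant edge) or two adjacent ones. -/
lemma move_cases [DecidableRel F.Adj] (h : IsCorona F B ℓ) (hs : IsFull B ℓ s) {x y : V}
    (hxy : (x, y) ∈ matchPlays F s) :
    IsFull B ℓ (s \ {x, y}) ∧
      ((∃ b ∈ s ∩ B, (s \ {x, y}) ∩ B = (s ∩ B).erase b) ∨
        ∃ b ∈ s ∩ B, ∃ c ∈ s ∩ B, F.Adj b c ∧
          (s \ {x, y}) ∩ B = ((s ∩ B).erase b).erase c) := by
  obtain ⟨hx, hy, ha⟩ := mem_matchPlays.1 hxy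
  by_cases hxB : x ∈ B
  · by_cases hyB : y ∈ B
    · exact ⟨h.isFull_edge hs hxB hyB, Or.inr ⟨x, mem_inter.2 ⟨hx, hxB⟩, y, mem_inter.2 ⟨hy, hyB⟩,
        ha, core_after_edge⟩⟩
    · obtain ⟨b, hb, rfl⟩ := h.exists_eq y hyB
      obtain rfl := h.unique b hb x ha.symm
      exact ⟨h.isFull_pendant hs hb, Or.inl ⟨x, mem_inter.2 ⟨hx, hxB⟩, h.core_after_pendant hb⟩⟩
  · obtain ⟨b, hb, rfl⟩ := h.exists_eq x hxB
    obtain rfl := h.unique b hb y ha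
    rw [pair_comm]
    exact ⟨h.isFull_pendant hs hb, Or.inl ⟨y, mem_inter.2 ⟨hy, hb⟩, h.core_after_pendant hb⟩⟩

end IsCorona

/-! ### Vertices with a remaining partner -/

/-- The vertices of `S` which are related by `R` to some vertex of `S`. -/
noncomputable def active (R : V → V → Prop) (S : Finset V) : Finset V :=
  open Classical in S.filter fun b => ∃ c ∈ S, R b c

section Active

variable {R : V → V → Prop} {S S' : Finset V}

omit [DecidableEq V] in
lemma mem_active {b : V} : b ∈ active R S ↔ b ∈ S ∧ ∃ c ∈ S, R b c := by
  simp [active]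

omit [DecidableEq V] in
lemma active_subset : active R S ⊆ S := fun _ hb => (mem_active.1 hb).1

omit [DecidableEq V] in
lemma active_mono (h : S' ⊆ S) : active R S' ⊆ active R S := by
  intro b hb
  obtain ⟨h1, c, h2, h3⟩ := mem_active.1 hb
  exact mem_active.2 ⟨h h1, c, h h2, h3⟩

lemma card_active_add_two_le (h : S' ⊆ S) {b c : V} (hbc : b ≠ c) (hb : b ∈ active R S)
    (hc : c ∈ active R S) (hb' : b ∉ active R S') (hc' : c ∉ active R S') :
    #(active R S') + 2 ≤ #(active R S) := by
  have h1 : insert b (insert c (active R S')) ⊆ active R S :=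
    insert_subset hb (insert_subset hc (active_mono h))
  have h2 := card_le_card h1
  rwa [card_insert_of_notMem (by simp [hbc, hb']), card_insert_of_notMem hc'] at h2

variable {σ : V → V}

lemma card_active_le_erase (hσ : σ.Involutive) (b : V) :
    #(active (fun x y => y = σ x) S) ≤ #(active (fun x y => y = σ x) (S.erase b)) + 2 := by
  have h1 : active (fun x y => y = σ x) S ⊆
      insert b (insert (σ b) (active (fun x y => y = σ x) (S.erase b))) := by
    intro x hx
    obtain ⟨h1, c, h2, rfl⟩ := mem_active.1 hx
    have := hσ x
    simp only [mem_insert, mem_active, mem_erase]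
    grind
  refine (card_le_card h1).trans ((card_insert_le _ _).trans ?_)
  have := card_insert_le (σ b) (active (fun x y => y = σ x) (S.erase b))
  omega

lemma card_active_le_erase_pair (hσ : σ.Involutive) (b : V) :
    #(active (fun x y => y = σ x) S) ≤
      #(active (fun x y => y = σ x) ((S.erase b).erase (σ b))) + 2 := by
  have h1 : active (fun x y => y = σ x) S ⊆
      insert b (insert (σ b) (active (fun x y => y = σ x) ((S.erase b).erase (σ b)))) := by
    intro x hx
    obtain ⟨h1, c, h2, rfl⟩ := mem_active.1 hx
    have := hσ x
    have := hσ b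
    simp only [mem_insert, mem_active, mem_erase]
    grind
  refine (card_le_card h1).trans ((card_insert_le _ _).trans ?_)
  have := card_insert_le (σ b) (active (fun x y => y = σ x) ((S.erase b).erase (σ b)))
  omega

end Active

omit [DecidableEq V] in
/-- A longest path in the subforest induced by `S` starts at a vertex of degree one. -/
lemma exists_end_vertex {F : SimpleGraph V} (hF : F.IsAcyclic) {S : Finset V} {b c : V}
    (hb : b ∈ S) (hc : c ∈ S) (hbc : F.Adj b c) :
    ∃ u ∈ S, ∃ w ∈ S, F.Adj u w ∧ ∀ x ∈ S, F.Adj u x → x = w := by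
  classical
  let H := F.induce (S : Set V)
  have hH : H.IsAcyclic := hF.induce _
  have : Nonempty (S : Set V) := ⟨⟨b, hb⟩⟩
  obtain ⟨u, v, p, hp, hmax⟩ := SimpleGraph.Walk.exists_isPath_forall_isPath_length_le_length H
  have hadj : H.Adj ⟨b, hb⟩ ⟨c, hc⟩ := hbc
  have hnil : ¬ p.Nil := by
    intro hn
    have h1 := hmax _ _ _ (SimpleGraph.Path.singleton hadj).2
    rw [SimpleGraph.Walk.length_eq_zero_iff.2 hn] at h1
    simp [SimpleGraph.Path.singleton] at h1
  refine ⟨u, u.2, p.snd, p.snd.2, p.adj_snd hnil, fun x hx hux => ?_⟩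
  have hux' : H.Adj u ⟨x, hx⟩ := hux
  refine congrArg Subtype.val (hH.eq_snd_of_adj_start hp hux' ?_)
  have : ¬(p.cons hux'.symm).IsPath := by grind [SimpleGraph.Walk.length_cons]
  grind [hp.cons]

/-! ### The two strategies -/

section Strategies

variable {F : SimpleGraph V} [DecidableRel F.Adj] {B : Finset V} {ℓ σ : V → V}

/-- Max's strategy: take the neighbour of an end vertex of the remaining core out of the core by
a pendant edge. -/
lemma le_gameValue (h : IsCorona F B ℓ) (hF : F.IsAcyclic) :
    ∀ (n : ℕ) (s : Finset V), #s = n → IsFull B ℓ s →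
      #(s ∩ B) ≤ gameValue F true s + #(active F.Adj (s ∩ B)) / 4 ∧
      #(s ∩ B) ≤ gameValue F false s + (#(active F.Adj (s ∩ B)) + 2) / 4 := by
  intro n
  induction n using Nat.strong_induction_on with
  | _ n ih =>
  rintro s rfl hs
  rcases (s ∩ B).eq_empty_or_nonempty with he | ⟨b₀, hb₀⟩
  · simp [he]
  have hplay := h.pendant_mem_matchPlays hs hb₀
  constructor
  · by_cases hE : ∃ b ∈ s ∩ B, ∃ c ∈ s ∩ B, F.Adj b c
    · obtain ⟨b, hb, c, hc, hbc⟩ := hE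
      obtain ⟨u, hu, w, hw, huw, huniq⟩ := exists_end_vertex hF hb hc hbc
      have hp := h.pendant_mem_matchPlays hs hw
      have hwB := (mem_inter.1 hw).2
      have h1 := (ih _ (matchPlays_card hp) _ rfl (h.isFull_pendant hs hwB)).2
      simp only [h.core_after_pendant hwB] at h1
      have h2 := le_gameValue_true hp
      have h3 := card_erase_add_one hw
      have h4 : #(active F.Adj ((s ∩ B).erase w)) + 2 ≤ #(active F.Adj (s ∩ B)) := by
        refine card_active_add_two_le (erase_subset _ _) huw.ne
          (mem_active.2 ⟨hu, w, hw, huw⟩) (mem_active.2 ⟨hw, u, hu, huw.symm⟩) ?_ ?_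
        · rw [mem_active]
          rintro ⟨-, x, hx, hux⟩
          exact (mem_erase.1 hx).1 (huniq x (mem_erase.1 hx).2 hux)
        · exact fun hh => (mem_erase.1 (active_subset hh)).1 rfl
      omega
    · have hbB := (mem_inter.1 hb₀).2
      have h1 := (ih _ (matchPlays_card hplay) _ rfl (h.isFull_pendant hs hbB)).2
      simp only [h.core_after_pendant hbB] at h1
      have h2 := le_gameValue_true hplay
      have h3 := card_erase_add_one hb₀
      have h4 : #(active F.Adj ((s ∩ B).erase b₀)) = 0 := by
        rw [card_eq_zero, eq_empty_iff_forall_notMem]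
        intro x hx
        obtain ⟨hx, c, hc, hxc⟩ := mem_active.1 (active_mono (erase_subset _ _) hx)
        exact hE ⟨x, hx, c, hc, hxc⟩
      omega
  · suffices #(s ∩ B) - (#(active F.Adj (s ∩ B)) + 2) / 4 ≤ gameValue F false s by omega
    refine le_gameValue_false ⟨_, hplay⟩ fun x y hxy => ?_
    obtain ⟨hs', hcase⟩ := h.move_cases hs hxy
    have h1 := (ih _ (matchPlays_card hxy) _ rfl hs').1
    rcases hcase with ⟨b, hb, he⟩ | ⟨b, hb, c, hc, hbc, he⟩
    · simp only [he] at h1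
      have h3 := card_erase_add_one hb
      have h4 := card_le_card (active_mono (R := F.Adj) (erase_subset b (s ∩ B)))
      omega
    · simp only [he] at h1
      have h3 := card_erase_add_one hb
      have h5 := card_erase_add_one (mem_erase.2 ⟨hbc.ne', hc⟩)
      have h4 : #(active F.Adj (((s ∩ B).erase b).erase c)) + 2 ≤ #(active F.Adj (s ∩ B)) := by
        refine card_active_add_two_le ((erase_subset _ _).trans (erase_subset _ _)) hbc.ne
          (mem_active.2 ⟨hb, c, hc, hbc⟩) (mem_active.2 ⟨hc, b, hb, hbc.symm⟩) ?_ ?_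
        · exact fun hh => (mem_erase.1 (mem_erase.1 (active_subset hh)).2).1 rfl
        · exact fun hh => (mem_erase.1 (active_subset hh)).1 rfl
      omega

/-- Min's strategy: play an edge `{b, σ b}` as long as there is one. -/
lemma gameValue_le (h : IsCorona F B ℓ) (hσ : σ.Involutive) (hadj : ∀ b ∈ B, F.Adj b (σ b)) :
    ∀ (n : ℕ) (s : Finset V), #s = n → IsFull B ℓ s →
      gameValue F true s + #(active (fun x y => y = σ x) (s ∩ B)) / 4 ≤ #(s ∩ B) ∧
      gameValue F false s + (#(active (fun x y => y = σ x) (s ∩ B)) + 2) / 4 ≤ #(s ∩ B) := by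
  intro n
  induction n using Nat.strong_induction_on with
  | _ n ih =>
  rintro s rfl hs
  have hT := card_le_card (active_subset (R := fun x y => y = σ x) (S := s ∩ B))
  constructor
  · suffices gameValue F true s ≤
        #(s ∩ B) - #(active (fun x y => y = σ x) (s ∩ B)) / 4 by omega
    refine gameValue_true_le fun x y hxy => ?_
    obtain ⟨hs', hcase⟩ := h.move_cases hs hxy
    have h1 := (ih _ (matchPlays_card hxy) _ rfl hs').2
    rcases hcase with ⟨b, hb, he⟩ | ⟨b, hb, c, hc, hbc, he⟩
    · simp only [he] at h1
      have h3 := card_erase_add_one hb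
      have h4 := card_active_le_erase (S := s ∩ B) hσ b
      omega
    · simp only [he] at h1
      have h3 := card_erase_add_one hb
      have h5 := card_erase_add_one (mem_erase.2 ⟨hbc.ne', hc⟩)
      have h4 := card_active_le_erase (S := s ∩ B) hσ b
      have h6 := card_active_le_erase (S := (s ∩ B).erase b) hσ c
      omega
  · rcases (active (fun x y => y = σ x) (s ∩ B)).eq_empty_or_nonempty with he | ⟨b, hb⟩
    · rw [he, card_empty]
      rcases (s ∩ B).eq_empty_or_nonempty with he' | ⟨b, hb⟩
      · rw [gameValue_eq_zero]
        · simp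
        · rintro ⟨⟨x, y⟩, hxy⟩
          obtain ⟨hx, hy, ha⟩ := mem_matchPlays.1 hxy
          rcases h.mem_or_mem ha with h1 | h1
          · exact eq_empty_iff_forall_notMem.1 he' x (mem_inter.2 ⟨hx, h1⟩)
          · exact eq_empty_iff_forall_notMem.1 he' y (mem_inter.2 ⟨hy, h1⟩)
      · have hp := h.pendant_mem_matchPlays hs hb
        have hbB := (mem_inter.1 hb).2
        have h1 := (ih _ (matchPlays_card hp) _ rfl (h.isFull_pendant hs hbB)).1
        simp only [h.core_after_pendant hbB] at h1
        have h2 := gameValue_false_le hp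
        have h3 := card_erase_add_one hb
        omega
    · obtain ⟨hb, c, hc, rfl⟩ := mem_active.1 hb
      obtain ⟨hbs, hbB⟩ := mem_inter.1 hb
      obtain ⟨hcs, hcB⟩ := mem_inter.1 hc
      have hbc := hadj b hbB
      have hp : (b, σ b) ∈ matchPlays F s := mem_matchPlays.2 ⟨hbs, hcs, hbc⟩
      have h1 := (ih _ (matchPlays_card hp) _ rfl (h.isFull_edge hs hbB hcB)).1
      simp only [IsCorona.core_after_edge] at h1
      have h2 := gameValue_false_le hp
      have h3 := card_erase_add_one hb
      have h5 := card_erase_add_one (mem_erase.2 ⟨hbc.ne', hc⟩)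
      have h4 := card_active_le_erase_pair (S := s ∩ B) hσ b
      omega

end Strategies

lemma IsCorona.matchingNumber_eq {F : SimpleGraph V} {B : Finset V} {ℓ : V → V}
    (h : IsCorona F B ℓ) : matchingNumber F = #B := by
  refine IsGreatest.csSup_eq ⟨⟨B.image fun b => s(b, ℓ b), ⟨?_, ?_⟩, ?_⟩, ?_⟩
  · intro e he
    obtain ⟨b, hb, rfl⟩ := mem_image.1 he
    exact h.adj b hb
  · intro e he f hf hef v hve hvf
    obtain ⟨b, hb, rfl⟩ := mem_image.1 he
    obtain ⟨c, hc, rfl⟩ := mem_image.1 hf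
    have h1 := h.notMem b hb
    have h2 := h.notMem c hc
    have h3 := h.injOn hb hc
    rw [Sym2.mem_iff] at hve hvf
    grind
  · refine card_image_of_injOn fun b hb c hc e => ?_
    have h1 := h.notMem c hc
    rcases Sym2.eq_iff.1 e with e | e
    · exact e.1
    · exact absurd (e.1 ▸ hb) h1
  · rintro n ⟨M, ⟨hM, hdis⟩, rfl⟩
    have hex : ∀ e ∈ M, ∃ b ∈ B, b ∈ e := by
      intro e he
      have := hM e he
      induction e with
      | _ x y =>
        rcases h.mem_or_mem (F.mem_edgeSet.1 this) with h1 | h1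
        · exact ⟨x, h1, by simp⟩
        · exact ⟨y, h1, by simp⟩
    rcases M.eq_empty_or_nonempty with rfl | ⟨e₀, he₀⟩
    · simp
    have : Nonempty V := ⟨(hex e₀ he₀).choose⟩
    choose! f hfB hfe using hex
    refine card_le_card_of_injOn f hfB fun e he e' he' hff => ?_
    by_contra hne
    exact hdis e he e' he' hne (f e) (hfe e he) (hff ▸ hfe e' he')

/-! ### The structure of the forest -/

/-- Exchange of neighbouring end and inner positions on `P₄`: `0 ↔ 1`, `2 ↔ 3`. -/
def pendantPos : Fin 4 → Fin 4 := ![1, 0, 3, 2]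

/-- Reversal of `P₄`: `0 ↔ 3`, `1 ↔ 2`. -/
def reversePos : Fin 4 → Fin 4 := ![3, 2, 1, 0]

/-- The set `B` of inner path vertices is the core of a corona in which the inner vertices of each
path are matched with each other. -/
lemma exists_corona {V : Type*} [Fintype V] [DecidableEq V] (F : SimpleGraph V)
    [DecidableRel F.Adj] {k : ℕ} (hk : Fintype.card V = 4 * k)
    (hleaves : #(univ.filter fun v => F.degree v = 1) = 2 * k)
    (p : Fin k → Fin 4 → V)
    (hinj : Function.Injective fun x : Fin k × Fin 4 => p x.1 x.2)
    (hpath : ∀ i, F.Adj (p i 0) (p i 1) ∧ F.Adj (p i 1) (p i 2) ∧ F.Adj (p i 2) (p i 3)) :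
    ∃ (B : Finset V) (ℓ σ : V → V), IsCorona F B ℓ ∧ σ.Involutive ∧
      (∀ b ∈ B, σ b ∈ B ∧ F.Adj b (σ b)) ∧ #B = 2 * k := by
  have hbij : Function.Bijective fun x : Fin k × Fin 4 => p x.1 x.2 := by
    rw [Fintype.bijective_iff_injective_and_card]
    refine ⟨hinj, ?_⟩
    simp [hk, mul_comm]
  let e : Fin k × Fin 4 ≃ V := Equiv.ofBijective _ hbij
  have hpne : ∀ i j j', j ≠ j' → p i j ≠ p i j' := by
    intro i j j' hj hp
    exact hj (congrArg Prod.snd (hinj (a₁ := (i, j)) (a₂ := (i, j')) hp))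
  let inner : Finset (Fin k × Fin 4) := univ ×ˢ {1, 2}
  let outer : Finset (Fin k × Fin 4) := univ ×ˢ {0, 3}
  have hinner : ∀ i, F.degree (p i 1) ≠ 1 ∧ F.degree (p i 2) ≠ 1 := by
    intro i
    obtain ⟨h1, h2, h3⟩ := hpath i
    constructor <;> intro hd <;>
      obtain ⟨w, -, hw⟩ := SimpleGraph.degree_eq_one_iff_existsUnique_adj.1 hd
    · exact hpne i 0 2 (by decide) ((hw _ h1.symm).trans (hw _ h2).symm)
    · exact hpne i 1 3 (by decide) ((hw _ h2.symm).trans (hw _ h3).symm)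
  -- All leaves are among the `2k` path ends, and there are `2k` leaves.
  have hleafset : (univ.filter fun v => F.degree v = 1) = outer.map e.toEmbedding := by
    refine eq_of_subset_of_card_le ?_ ?_
    · intro v hv
      obtain ⟨⟨i, j⟩, rfl⟩ := e.surjective v
      have hd : F.degree (p i j) = 1 := (mem_filter.1 hv).2
      have := hinner i
      refine mem_map.2 ⟨(i, j), ?_, rfl⟩
      simp only [outer, mem_product, mem_univ, true_and, mem_insert, mem_singleton]
      fin_cases j <;> simp_all
    · rw [hleaves, card_map, card_product]
      simp [mul_comm]
  have houter : ∀ i j, j = 0 ∨ j = 3 → F.degree (p i j) = 1 := by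
    intro i j hj
    have : e (i, j) ∈ outer.map e.toEmbedding :=
      mem_map.2 ⟨(i, j), by simpa [outer] using hj, rfl⟩
    rw [← hleafset] at this
    exact (mem_filter.1 this).2
  have hB : ∀ i j, e (i, j) ∈ inner.map e.toEmbedding ↔ j = 1 ∨ j = 2 := by
    intro i j
    simp [inner]
  have hpend : ∀ i j, F.Adj (p i j) (p i (pendantPos j)) := by
    intro i j
    obtain ⟨h1, h2, h3⟩ := hpath i
    fin_cases j
    exacts [h1, h1.symm, h3, h3.symm]
  refine ⟨inner.map e.toEmbedding,
    fun v => e ((e.symm v).1, pendantPos (e.symm v).2),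
    fun v => e ((e.symm v).1, reversePos (e.symm v).2), ⟨?_, ?_, ?_, ?_⟩, ?_, ?_, ?_⟩
  · intro b hb
    obtain ⟨⟨i, j⟩, rfl⟩ := e.surjective b
    simp only [Equiv.symm_apply_apply]
    exact hpend i j
  · intro b hb
    obtain ⟨⟨i, j⟩, rfl⟩ := e.surjective b
    simp only [Equiv.symm_apply_apply, hB] at hb ⊢
    revert j; decide
  · intro b hb w hw
    obtain ⟨⟨i, j⟩, rfl⟩ := e.surjective b
    simp only [Equiv.symm_apply_apply, hB] at hb hw
    have h1 : F.degree (p i (pendantPos j)) = 1 := by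
      refine houter i _ ?_
      clear hw
      revert j; decide
    obtain ⟨x, -, hx⟩ := SimpleGraph.degree_eq_one_iff_existsUnique_adj.1 h1
    exact (hx _ hw).trans (hx _ (hpend i j).symm).symm
  · intro v hv
    obtain ⟨⟨i, j⟩, rfl⟩ := e.surjective v
    rw [hB] at hv
    refine ⟨e (i, pendantPos j), ?_, ?_⟩
    · rw [hB]
      revert j; decide
    · simp only [Equiv.symm_apply_apply]
      congr 2
      clear hv
      revert j; decide
  · intro v
    obtain ⟨⟨i, j⟩, rfl⟩ := e.surjective v
    simp only [Equiv.symm_apply_apply]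
    congr 2
    revert j; decide
  · intro b hb
    obtain ⟨⟨i, j⟩, rfl⟩ := e.surjective b
    simp only [Equiv.symm_apply_apply, hB] at hb ⊢
    obtain ⟨-, h2, -⟩ := hpath i
    rcases hb with rfl | rfl
    · exact ⟨Or.inr rfl, h2⟩
    · exact ⟨Or.inl rfl, h2.symm⟩
  · rw [card_map, card_product]
    simp [mul_comm]

end MatchingGame

open MatchingGame

/-- if `F` is a forest on `n` vertices (`8 ∣ n`, `n > 0`) with
exactly `n/2` leaves, all of which are covered by `n/4` pairwise disjoint
copies of `P₄` in `F`, then `Max(F) = (3/8)n = (3/4)·α'(F)`. -/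
theorem stmt14 {V : Type*} [Fintype V] [DecidableEq V] (F : SimpleGraph V)
    [DecidableRel F.Adj] (hF : F.IsAcyclic)
    (hmod : Fintype.card V % 8 = 0) (hpos : 0 < Fintype.card V)
    (hleaves : (Finset.univ.filter fun v => F.degree v = 1).card
      = Fintype.card V / 2)
    (p : Fin (Fintype.card V / 4) → Fin 4 → V)
    (hinj : Function.Injective fun x : Fin (Fintype.card V / 4) × Fin 4 =>
      p x.1 x.2)
    (hpath : ∀ i, F.Adj (p i 0) (p i 1) ∧ F.Adj (p i 1) (p i 2) ∧
      F.Adj (p i 2) (p i 3))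
    (hcover : ∀ v : V, F.degree v = 1 → ∃ i j, p i j = v) :
    gameMax F = 3 * Fintype.card V / 8 ∧
    4 * gameMax F = 3 * matchingNumber F := by
  obtain ⟨B, ℓ, σ, h, hσ, hσB, hB⟩ := exists_corona F (k := Fintype.card V / 4) (by omega)
    (by omega) p hinj hpath
  have hfull : IsFull B ℓ univ := fun b _ _ => mem_univ _
  have hT : active (fun x y => y = σ x) B = B :=
    active_subset.antisymm fun b hb => mem_active.2 ⟨hb, σ b, (hσB b hb).1, rfl⟩
  have hN := card_le_card (active_subset (R := F.Adj) (S := B))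
  have hval : gameMax F = 3 * Fintype.card V / 8 := by
    unfold gameMax
    let : DecidableRel F.Adj := Classical.decRel _
    have h1 := (le_gameValue h hF _ univ rfl hfull).1
    have h2 := (gameValue_le h hσ (fun b hb => (hσB b hb).2) _ univ rfl hfull).1
    rw [univ_inter] at h1 h2
    rw [hT] at h2
    omega
  refine ⟨hval, ?_⟩
  rw [hval, h.matchingNumber_eq, hB]
  omega
end

section
/- If G is a connected r-regular finite simple graph on n vertices with r ≥ 1, then (4r - 3)·Max(G) ≥ r·n - 2, i.e., Max(G) ≥ (rn - 2)/(4r - 3). -/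
/-!
Write `P(s)` for the number of ordered pairs of adjacent vertices in `s`, i.e. twice the number of
edges of `G[s]`. Playing an edge `uv` removes `deg u + deg v - 1` edges, so every move lowers `P` by
at most `4r - 2`. Once some vertex has been deleted, connectedness gives Max an edge `uv` with
`deg u + deg v ≤ 2r - 1` whenever an edge is left: along a walk from a playable edge to a deleted
vertex, the last vertex `x` before leaving `s` has lost a neighbour, and the edge through which the
walk arrived at `x` (or the initial edge itself) is still playable. Max's move then lowers `P` by at
most `4r - 4`.

By induction on `s`, for `s ≠ V` this yields `P(s) ≤ (4r - 3) v` when Max is to move and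
`P(s) ≤ (4r - 3) v + 1` when Min is to move, `v` being the game value (`gameValue_bound`). Max's
first move in `G` loses at most `4r - 2`, so `rn = P(V) ≤ (4r - 3) Max(G) + 2`.
-/

open Finset

variable {V : Type*} [DecidableEq V]

/-- The neighbours of `x` among the remaining vertices `s`. -/
def nbrIn (G : SimpleGraph V) [DecidableRel G.Adj] (s : Finset V) (x : V) : Finset V :=
  s.filter fun y => G.Adj x y

/-- Playing `uv` destroys `deg u + deg v - 1` edges; on ordered pairs, twice as many. -/
lemma matchPlays_card_le (G : SimpleGraph V) [DecidableRel G.Adj] {s : Finset V} {u v : V}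
    (hu : u ∈ s) (huv : G.Adj u v) :
    (matchPlays G s).card + 2 ≤ (matchPlays G (s \ {u, v})).card
      + 2 * ((nbrIn G s u).card + (nbrIn G s v).card) := by
  have hsub : matchPlays G s ⊆ matchPlays G (s \ {u, v}) ∪
      (({u} ×ˢ nbrIn G s u ∪ nbrIn G s u ×ˢ {u}) ∪
      ({v} ×ˢ (nbrIn G s v).erase u ∪ (nbrIn G s v).erase u ×ˢ {v})) := by
    rintro ⟨a, b⟩ h
    have := G.adj_comm a b
    simp only [matchPlays, nbrIn, mem_union, mem_filter, mem_product, mem_sdiff, mem_insert,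
      mem_singleton, mem_erase] at h ⊢
    grind
  have h1 := card_le_card hsub
  have h2 := card_union_le (matchPlays G (s \ {u, v}))
    (({u} ×ˢ nbrIn G s u ∪ nbrIn G s u ×ˢ {u}) ∪
      ({v} ×ˢ (nbrIn G s v).erase u ∪ (nbrIn G s v).erase u ×ˢ {v}))
  have h3 := card_union_le ({u} ×ˢ nbrIn G s u ∪ nbrIn G s u ×ˢ {u})
      ({v} ×ˢ (nbrIn G s v).erase u ∪ (nbrIn G s v).erase u ×ˢ {v})
  have h4 := card_union_le ({u} ×ˢ nbrIn G s u) (nbrIn G s u ×ˢ {u})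
  have h5 := card_union_le ({v} ×ˢ (nbrIn G s v).erase u) ((nbrIn G s v).erase u ×ˢ {v})
  have hmem : u ∈ nbrIn G s v := by simp [nbrIn, hu, huv.symm]
  have h6 := card_erase_add_one hmem
  simp only [card_product, card_singleton] at h4 h5
  omega

lemma nbrIn_card_le [Fintype V] {G : SimpleGraph V} [DecidableRel G.Adj] {r : ℕ}
    (hreg : G.IsRegularOfDegree r) (s : Finset V) (x : V) : (nbrIn G s x).card ≤ r := by
  rw [← hreg x, ← G.card_neighborFinset_eq_degree]
  exact card_le_card fun y hy => by simpa using (mem_filter.mp hy).2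

lemma nbrIn_card_lt [Fintype V] {G : SimpleGraph V} [DecidableRel G.Adj] {r : ℕ}
    (hreg : G.IsRegularOfDegree r) {s : Finset V} {x y : V} (hxy : G.Adj x y) (hy : y ∉ s) :
    (nbrIn G s x).card < r := by
  rw [← hreg x, ← G.card_neighborFinset_eq_degree]
  refine card_lt_card ⟨fun y hy => by simpa using (mem_filter.mp hy).2, fun h => hy ?_⟩
  exact (mem_filter.mp (h ((G.mem_neighborFinset x y).mpr hxy))).1

/-- A walk that leaves `s`, starting at an endpoint of an edge of `G[s]`, leads to an edge of `G[s]`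
one of whose endpoints has a neighbour outside `s`. -/
lemma exists_boundary_edge {G : SimpleGraph V} {s : Finset V} {u w : V} (p : G.Walk u w)
    (hu : u ∈ s) (hw : w ∉ s) {v : V} (hv : v ∈ s) (huv : G.Adj u v) :
    ∃ x ∈ s, ∃ y ∈ s, G.Adj x y ∧ ∃ z ∉ s, G.Adj x z := by
  induction p generalizing v with
  | nil => exact absurd hu hw
  | @cons a b c h p ih =>
    by_cases hb : b ∈ s
    · exact ih hb hw hu h.symm
    · exact ⟨a, hu, v, hv, huv, b, hb, h⟩

lemma gameValue_max_ge (G : SimpleGraph V) [DecidableRel G.Adj] {s : Finset V} {p : V × V}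
    (hp : p ∈ matchPlays G s) :
    1 + gameValue G false (s \ {p.1, p.2}) ≤ gameValue G true s := by
  rw [gameValue.eq_1 G true s, dif_pos ⟨p, hp⟩, if_pos rfl]
  exact le_sup (f := fun q : {x // x ∈ matchPlays G s} =>
    1 + gameValue G false (s \ {q.1.1, q.1.2})) (mem_attach _ ⟨p, hp⟩)

lemma gameValue_min_eq (G : SimpleGraph V) [DecidableRel G.Adj] {s : Finset V}
    (h : (matchPlays G s).Nonempty) :
    ∃ p ∈ matchPlays G s, gameValue G false s = 1 + gameValue G true (s \ {p.1, p.2}) := by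
  rw [gameValue.eq_1 G false s, dif_pos h, if_neg (by simp)]
  obtain ⟨q, -, hq⟩ := exists_mem_eq_inf' (s := (matchPlays G s).attach) (by simpa using h)
    (fun q => 1 + gameValue G true (s \ {q.1.1, q.1.2}))
  exact ⟨q.1, q.2, hq⟩

lemma sdiff_pair_ne_univ [Fintype V] (s : Finset V) (u v : V) : s \ {u, v} ≠ univ := fun h => by
  have := h ▸ mem_univ u
  simp at this

/-- The invariant of the game once a vertex has been deleted. The degree is written `k + 1`, so that
`4 * k + 1` is `4r - 3`. -/
lemma gameValue_bound [Fintype V] {G : SimpleGraph V} [DecidableRel G.Adj] {k : ℕ}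
    (hreg : G.IsRegularOfDegree (k + 1)) (hconn : G.Connected) (s : Finset V) (hs : s ≠ univ) :
    (matchPlays G s).card ≤ (4 * k + 1) * gameValue G true s ∧
      (matchPlays G s).card ≤ (4 * k + 1) * gameValue G false s + 1 := by
  induction s using Finset.strongInduction with
  | H s ih =>
  rcases (matchPlays G s).eq_empty_or_nonempty with he | hne
  · simp [he]
  have ih' : ∀ p ∈ matchPlays G s,
      (matchPlays G (s \ {p.1, p.2})).card
          ≤ (4 * k + 1) * gameValue G true (s \ {p.1, p.2}) ∧
        (matchPlays G (s \ {p.1, p.2})).card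
          ≤ (4 * k + 1) * gameValue G false (s \ {p.1, p.2}) + 1 := fun p hp =>
    ih _ (sdiff_subset.ssubset_of_ne fun h => (matchPlays_card hp).ne (congrArg card h))
      (sdiff_pair_ne_univ s _ _)
  constructor
  · obtain ⟨⟨u, v⟩, hp⟩ := hne
    obtain ⟨⟨hu, hv⟩, huv⟩ : (u ∈ s ∧ v ∈ s) ∧ G.Adj u v := by simpa [matchPlays] using hp
    obtain ⟨w, hw⟩ : ∃ w, w ∉ s := by
      by_contra! h
      exact hs (eq_univ_iff_forall.mpr h)
    obtain ⟨p⟩ := hconn.preconnected u w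
    obtain ⟨x, hx, y, hy, hxy, z, hz, hxz⟩ := exists_boundary_edge p hu hw hv huv
    have hxy' : (x, y) ∈ matchPlays G s := by simp [matchPlays, hx, hy, hxy]
    have h1 := (ih' _ hxy').2
    have h2 := gameValue_max_ge G hxy'
    have h3 := matchPlays_card_le G hx hxy
    have h4 := nbrIn_card_lt hreg hxz hz
    have h5 := nbrIn_card_le hreg s y
    have h6 := Nat.mul_le_mul_left (4 * k + 1) h2
    rw [mul_add] at h6
    dsimp only at h1 h6
    omega
  · obtain ⟨⟨u, v⟩, hp, hval⟩ := gameValue_min_eq G hne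
    obtain ⟨⟨hu, hv⟩, huv⟩ : (u ∈ s ∧ v ∈ s) ∧ G.Adj u v := by simpa [matchPlays] using hp
    have h1 := (ih' _ hp).1
    have h3 := matchPlays_card_le G hu huv
    have h4 := nbrIn_card_le hreg s u
    have h5 := nbrIn_card_le hreg s v
    rw [hval, mul_add]
    dsimp only at h1 ⊢
    omega

lemma matchPlays_univ_card [Fintype V] {G : SimpleGraph V} [DecidableRel G.Adj] {r : ℕ}
    (hreg : G.IsRegularOfDegree r) :
    (matchPlays G univ).card = r * Fintype.card V := by
  have h : (matchPlays G univ).card = ∑ x : V, G.degree x := by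
    rw [matchPlays, card_filter, sum_product]
    refine sum_congr rfl fun x _ => ?_
    rw [← G.card_neighborFinset_eq_degree, G.neighborFinset_eq_filter, card_filter]
  rw [h, sum_congr rfl fun x _ => hreg x]
  simp [mul_comm]

/-- for a connected `r`-regular graph on `n` vertices with
`r ≥ 1`, `(4r - 3)·Max(G) ≥ rn - 2`. -/
theorem stmt18 {V : Type*} [Fintype V] [DecidableEq V] (G : SimpleGraph V)
    [DecidableRel G.Adj] (r : ℕ) (hr : 1 ≤ r)
    (hreg : G.IsRegularOfDegree r) (hconn : G.Connected) :
    (r : ℤ) * Fintype.card V - 2 ≤ (4 * r - 3) * gameMax G := by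
  -- `gameMax` uses the classical decidability instance rather than the given one.
  have hM : gameMax G = gameValue G true univ := by
    unfold gameMax
    congr!
  obtain ⟨k, rfl⟩ : ∃ k, r = k + 1 := ⟨r - 1, by omega⟩
  have hcard := matchPlays_univ_card hreg
  have key : (matchPlays G univ).card ≤ (4 * k + 1) * gameMax G + 2 := by
    rcases (matchPlays G univ).eq_empty_or_nonempty with he | ⟨⟨u, v⟩, hp⟩
    · simp [he]
    have huv : G.Adj u v := by simpa [matchPlays] using hp
    have h1 := (gameValue_bound hreg hconn _ (sdiff_pair_ne_univ univ u v)).2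
    have h2 := gameValue_max_ge G hp
    rw [← hM] at h2
    have h3 := matchPlays_card_le G (mem_univ u) huv
    have h4 := nbrIn_card_le hreg univ u
    have h5 := nbrIn_card_le hreg univ v
    have h6 := Nat.mul_le_mul_left (4 * k + 1) h2
    rw [mul_add] at h6
    dsimp only at h1 h6
    omega
  rw [hcard] at key
  zify at key
  push_cast
  linarith
end
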